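/- arXiv:2004.07163 — 6 statements merged into one kernel-verified Lean document; each statement's English description precedes it below -/
import Mathlib

section
/- Let n ≥ 1 and m ≥ 1, and let T : Fin n → Fin n → Fin n → EuclideanSpace ℝ (Fin m) be totally symmetric, i.e. T i j k is unchanged under every permutation of the three indices (i,j,k). Then Σ_{i,j,k} ‖T i j k‖² ≥ (3/(n+2)) · Σ_i ‖Σ_j T i j j‖². -/
/-!
Let `S = traceSum T` be the sum of the three traces of `T`, a vector-valued covector. The adjoint
of `traceSum` is `v ↦ symDelta v`, the symmetrised product of `v` with the Kronecker delta, and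
`traceSum (symDelta v) = 3 (n + 2) v`. Thus `|symDelta v|² = 3 (n + 2) |v|²`, and
`|3 (n + 2) T - symDelta S|² ≥ 0` becomes `|S|² ≤ 3 (n + 2) |T|²` for every 3-tensor `T`. When the
three traces agree with `H`, as they do for symmetric `T`, one has `S = 3 H`.
-/

section SymmetrisedTrace

open scoped InnerProductSpace

variable {ι E : Type*} [Fintype ι]

/-- The sum of the three traces of a 3-tensor with values in `E`. It is not divided by 3, so that
it is the adjoint of `symDelta`. -/
def traceSum [AddCommMonoid E] (T : ι → ι → ι → E) (i : ι) : E :=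
  ∑ j, T i j j + ∑ j, T j i j + ∑ j, T j j i

/-- The symmetrised product `δ_{jk} v_i + δ_{ik} v_j + δ_{ij} v_k` of an `E`-valued covector `v`
with the Kronecker delta, without the factor `1 / 3`; these are the pure trace tensors among the
symmetric ones. -/
def symDelta [DecidableEq ι] [AddCommMonoid E] (v : ι → E) (i j k : ι) : E :=
  (if j = k then v i else 0) + (if i = k then v j else 0) + (if i = j then v k else 0)

lemma traceSum_symDelta [DecidableEq ι] [AddCommMonoid E] [Module ℝ E] (v : ι → E) (i : ι) :
    traceSum (symDelta v) i = (3 * (Fintype.card ι + 2 : ℝ)) • v i := by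
  simp only [traceSum, symDelta, Finset.sum_add_distrib, Finset.sum_ite_eq, Finset.sum_ite_eq',
    Finset.mem_univ, if_true, Finset.sum_const, Finset.card_univ, ← Nat.cast_smul_eq_nsmul ℝ]
  module

variable [SeminormedAddCommGroup E] [InnerProductSpace ℝ E]

lemma sum_inner_symDelta [DecidableEq ι] (T : ι → ι → ι → E) (v : ι → E) :
    ∑ i, ∑ j, ∑ k, ⟪T i j k, symDelta v i j k⟫_ℝ = ∑ i, ⟪traceSum T i, v i⟫_ℝ := by
  have contract_jk : ∑ i, ∑ j, ∑ k, ⟪T i j k, if j = k then v i else 0⟫_ℝ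
      = ∑ i, ⟪∑ j, T i j j, v i⟫_ℝ := by
    simp [apply_ite, sum_inner]
  have contract_ik : ∑ i, ∑ j, ∑ k, ⟪T i j k, if i = k then v j else 0⟫_ℝ
      = ∑ j, ⟪∑ i, T i j i, v j⟫_ℝ := by
    rw [Finset.sum_comm]
    simp [apply_ite, sum_inner]
  have contract_ij : ∑ i, ∑ j, ∑ k, ⟪T i j k, if i = j then v k else 0⟫_ℝ
      = ∑ k, ⟪∑ i, T i i k, v k⟫_ℝ := by
    rw [Finset.sum_comm_cycle]
    simp [apply_ite, sum_inner]
  simp only [symDelta, traceSum, inner_add_left, inner_add_right, Finset.sum_add_distrib,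
    contract_jk, contract_ik, contract_ij]

lemma sum_norm_sq_symDelta [DecidableEq ι] (v : ι → E) :
    ∑ i, ∑ j, ∑ k, ‖symDelta v i j k‖ ^ 2 = 3 * (Fintype.card ι + 2) * ∑ i, ‖v i‖ ^ 2 := by
  simp only [← real_inner_self_eq_norm_sq, sum_inner_symDelta, traceSum_symDelta,
    real_inner_smul_left, Finset.mul_sum]

theorem sum_norm_sq_traceSum_le (T : ι → ι → ι → E) :
    ∑ i, ‖traceSum T i‖ ^ 2 ≤ 3 * (Fintype.card ι + 2) * ∑ i, ∑ j, ∑ k, ‖T i j k‖ ^ 2 := by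
  classical
  set N : ℝ := 3 * (Fintype.card ι + 2) with hN
  have N_pos : 0 < N := by positivity
  have expand : ∑ i, ∑ j, ∑ k, ‖N • T i j k - symDelta (traceSum T) i j k‖ ^ 2
      = N * (N * ∑ i, ∑ j, ∑ k, ‖T i j k‖ ^ 2 - ∑ i, ‖traceSum T i‖ ^ 2) := by
    simp only [norm_sub_sq_real, norm_smul, mul_pow, real_inner_smul_left, Real.norm_eq_abs,
      sq_abs, Finset.sum_add_distrib, Finset.sum_sub_distrib, ← Finset.mul_sum,
      sum_inner_symDelta, sum_norm_sq_symDelta, real_inner_self_eq_norm_sq, ← hN]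
    ring
  have nonneg : 0 ≤ N * (N * ∑ i, ∑ j, ∑ k, ‖T i j k‖ ^ 2 - ∑ i, ‖traceSum T i‖ ^ 2) := by
    rw [← expand]
    positivity
  exact sub_nonneg.mp (nonneg_of_mul_nonneg_right nonneg N_pos)

theorem stmt0_general (T : ι → ι → ι → E)
    (h_mid : ∀ i, ∑ j, T j i j = ∑ j, T i j j) (h_last : ∀ i, ∑ j, T j j i = ∑ j, T i j j) :
    (3 / ((Fintype.card ι : ℝ) + 2)) * ∑ i, ‖∑ j, T i j j‖ ^ 2
      ≤ ∑ i, ∑ j, ∑ k, ‖T i j k‖ ^ 2 := by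
  have traceSum_eq (i : ι) : traceSum T i = (3 : ℝ) • ∑ j, T i j j := by
    rw [traceSum, h_mid, h_last]
    module
  have sum_traceSum : ∑ i, ‖traceSum T i‖ ^ 2 = 9 * ∑ i, ‖∑ j, T i j j‖ ^ 2 := by
    simp only [traceSum_eq, norm_smul, mul_pow, ← Finset.mul_sum]
    norm_num
  have bound := sum_norm_sq_traceSum_le T
  rw [div_mul_eq_mul_div, div_le_iff₀ (by positivity)]
  linarith

end SymmetrisedTrace

/-- Kato-type inequality: for a totally symmetric 3-tensor `T` with values in
`EuclideanSpace ℝ (Fin m)`, one has `∑ ‖T i j k‖² ≥ (3/(n+2)) ∑ ‖∑_j T i j j‖²`. -/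
theorem stmt0 (n m : ℕ) (hn : 1 ≤ n) (hm : 1 ≤ m)
    (T : Fin n → Fin n → Fin n → EuclideanSpace ℝ (Fin m))
    (hsymm : ∀ (σ : Equiv.Perm (Fin 3)) (f : Fin 3 → Fin n),
      T (f (σ 0)) (f (σ 1)) (f (σ 2)) = T (f 0) (f 1) (f 2)) :
    (3 / ((n : ℝ) + 2)) * ∑ i, ‖∑ j, T i j j‖ ^ 2 ≤ ∑ i, ∑ j, ∑ k, ‖T i j k‖ ^ 2 := by
  simpa only [Fintype.card_fin] using stmt0_general T
    (fun i => Finset.sum_congr rfl fun j _ => hsymm (Equiv.swap 0 1) ![i, j, j])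
    (fun i => Finset.sum_congr rfl fun j _ => hsymm (Equiv.swap 0 2) ![i, j, j])
end

section
/- Let n ≥ 2, m ≥ 1, and let (h_α)_{α ∈ Fin m} be a family of symmetric real n×n matrices. Set H_α := tr h_α, |H|² := Σ_α H_α², |A|² := Σ_α Σ_{i,j} ((h_α)_{ij})², and define R₁ := Σ_{α,β} (Σ_{i,j} (h_α)_{ij}(h_β)_{ij})² + Σ_{i,j,α,β} (Σ_p ((h_α)_{ip}(h_β)_{jp} − (h_β)_{ip}(h_α)_{jp}))² and R₂ := Σ_{i,j} (Σ_α H_α (h_α)_{ij})². If 0 < c ≤ 4/(3n) and |A|² ≤ c|H|², then R₁ ≤ c·R₂. -/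
/-!
If the mean curvature `H = (tr h α)` vanishes, the pinching forces `h = 0`. Otherwise put
`u = H / |H|`, `a = ∑ α, u α • h α` and `g α = h α - u α • a`: the `g α` are trace free,
`tr a = |H|` and `∑ α, u α • g α = 0`. By Pythagoras the splitting is orthogonal for every bilinear
expression in `h`, so that `|A|² = |a|² + ∑ |g α|²`, `R₂ = |H|² |a|²` and
`R₁ = |a|⁴ + 2 ∑ α, (⟪a, g α⟫² + |[a, g α]|²) + ∑ α β, (⟪g α, g β⟫² + |[g α, g β]|²)`.
In the middle sum `a` may be replaced by its trace-free part, of square norm `|a|² - |H|² / n`.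

The only matrix inequality needed is `⟪a, b⟫² + |[a, b]|² ≤ 2 |a|² |b|²`. With `x = |a|²`,
`y = |H|² / n` and `z = ∑ |g α|²` it yields `R₁ ≤ x² + 4 (x - y) z + 2 z²`, while the pinching says
`x + z ≤ c |H|² ≤ 4 y / 3`; hence `R₁ - c R₂ ≤ z (3 (x + z) - 4 y) - z² ≤ 0`.
-/

open Matrix Finset
open scoped RealInnerProductSpace

attribute [local instance] frobeniusNormedAddCommGroup

namespace Pinching

variable {ι κ : Type*} [Fintype ι] [Fintype κ]

section Splitting

variable {V E : Type*} [AddCommGroup V] [Module ℝ V] [NormedAddCommGroup E] [InnerProductSpace ℝ E]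
  {u : κ → ℝ}

lemma sum_norm_sq_smul_add (hu : ∑ α, u α ^ 2 = 1) (x : E) {v : κ → E}
    (hv : ∑ α, u α • v α = 0) :
    ∑ α, ‖u α • x + v α‖ ^ 2 = ‖x‖ ^ 2 + ∑ α, ‖v α‖ ^ 2 := by
  have cross : ∑ α, u α * ⟪x, v α⟫ = 0 := by
    simp_rw [← real_inner_smul_right, ← inner_sum, hv, inner_zero_right]
  calc ∑ α, ‖u α • x + v α‖ ^ 2
      = ∑ α, (u α ^ 2 * ‖x‖ ^ 2 + 2 * (u α * ⟪x, v α⟫) + ‖v α‖ ^ 2) := by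
        simp only [norm_add_sq_real, norm_smul, mul_pow, Real.norm_eq_abs, sq_abs,
          real_inner_smul_left]
    _ = ‖x‖ ^ 2 + ∑ α, ‖v α‖ ^ 2 := by
        simp only [sum_add_distrib, ← sum_mul, ← mul_sum, hu, cross, one_mul, mul_zero, add_zero]

lemma sum_norm_sq_map_smul_add (hu : ∑ α, u α ^ 2 = 1) (L : V →ₗ[ℝ] E) (a : V) {g : κ → V}
    (hg : ∑ α, u α • g α = 0) :
    ∑ α, ‖L (u α • a + g α)‖ ^ 2 = ‖L a‖ ^ 2 + ∑ α, ‖L (g α)‖ ^ 2 := by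
  have hLg : ∑ α, u α • L (g α) = 0 := by simp_rw [← map_smul, ← map_sum, hg, map_zero]
  simp_rw [map_add, map_smul]
  exact sum_norm_sq_smul_add hu _ hLg

lemma sum_sum_norm_sq_map₂_smul_add (hu : ∑ α, u α ^ 2 = 1) (B : V →ₗ[ℝ] V →ₗ[ℝ] E) (a : V)
    {g : κ → V} (hg : ∑ α, u α • g α = 0) :
    ∑ α, ∑ β, ‖B (u α • a + g α) (u β • a + g β)‖ ^ 2
      = ‖B a a‖ ^ 2 + ∑ α, ‖B a (g α)‖ ^ 2 + ∑ α, ‖B (g α) a‖ ^ 2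
        + ∑ α, ∑ β, ‖B (g α) (g β)‖ ^ 2 := by
  have split_left (y : V) : ∑ α, ‖B (u α • a + g α) y‖ ^ 2
      = ‖B a y‖ ^ 2 + ∑ α, ‖B (g α) y‖ ^ 2 :=
    sum_norm_sq_map_smul_add hu (B.flip y) a hg
  simp_rw [sum_norm_sq_map_smul_add hu (B _) a hg, sum_add_distrib, split_left]
  rw [sum_comm]
  simp_rw [split_left, sum_add_distrib]
  rw [sum_comm (f := fun β α => ‖B (g α) (g β)‖ ^ 2)]
  ring

end Splitting

/-- The inner product `⟪a, b⟫ = tr (a bᵀ)` on real square matrices, inducing the Frobenius norm.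
Mathlib leaves the choice of a matrix norm open, so this instance is local as well. -/
noncomputable local instance frobeniusInnerProductSpace : InnerProductSpace ℝ (Matrix ι ι ℝ) where
  __ := frobeniusNormedSpace
  inner a b := ∑ i, ∑ j, a i j * b i j
  norm_sq_eq_re_inner a := by
    have : 0 ≤ ∑ i, ∑ j, a i j ^ 2 := sum_nonneg fun _ _ => sum_nonneg fun _ _ => sq_nonneg _
    simp only [frobenius_norm_def, Real.norm_eq_abs, Real.rpow_two, sq_abs, ← Real.sqrt_eq_rpow,
      Real.sq_sqrt this, ← sq, RCLike.re_to_real]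
  conj_inner_symm a b := by simp [mul_comm]
  add_left a b d := by simp [add_mul, sum_add_distrib]
  smul_left a b r := by simp [mul_assoc, mul_sum]

lemma inner_eq_sum (a b : Matrix ι ι ℝ) : ⟪a, b⟫ = ∑ i, ∑ j, a i j * b i j := rfl

lemma norm_sq_eq_sum (a : Matrix ι ι ℝ) : ‖a‖ ^ 2 = ∑ i, ∑ j, a i j ^ 2 := by
  rw [← real_inner_self_eq_norm_sq, inner_eq_sum]
  simp only [sq]

lemma inner_eq_trace (a b : Matrix ι ι ℝ) : ⟪a, b⟫ = trace (a * star b) := by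
  simp [inner_eq_sum, trace, mul_apply, star_eq_conjTranspose]

section Diagonalization

variable [DecidableEq ι]

lemma inner_conjStarAlgAut (U : unitary (Matrix ι ι ℝ)) (a b : Matrix ι ι ℝ) :
    ⟪Unitary.conjStarAlgAut ℝ _ U a, Unitary.conjStarAlgAut ℝ _ U b⟫ = ⟪a, b⟫ := by
  rw [inner_eq_trace, inner_eq_trace, ← map_star, ← map_mul, Unitary.conjStarAlgAut_apply,
    trace_mul_cycle, Unitary.coe_star_mul_self, one_mul]

lemma norm_conjStarAlgAut (U : unitary (Matrix ι ι ℝ)) (a : Matrix ι ι ℝ) :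
    ‖Unitary.conjStarAlgAut ℝ _ U a‖ = ‖a‖ := by
  rw [norm_eq_sqrt_real_inner, inner_conjStarAlgAut, ← norm_eq_sqrt_real_inner]

/-- The diagonal of `b` only enters the inner product, which Cauchy–Schwarz estimates; the
off-diagonal part only enters the commutator, whose entries `(dᵢ - dⱼ) bᵢⱼ` satisfy
`(dᵢ - dⱼ)² ≤ 2 ‖d‖²`. -/
lemma norm_lie_diagonal_sq_add_inner_sq_le (d : ι → ℝ) (b : Matrix ι ι ℝ) :
    ‖⁅diagonal d, b⁆‖ ^ 2 + 2 * ⟪diagonal d, b⟫ ^ 2 ≤ 2 * (‖diagonal d‖ ^ 2 * ‖b‖ ^ 2) := by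
  have lie_apply (i j : ι) : ⁅diagonal d, b⁆ i j = (d i - d j) * b i j := by
    rw [Ring.lie_def, Matrix.sub_apply, diagonal_mul, mul_diagonal]
    ring
  have inner_diag : ⟪diagonal d, b⟫ = ∑ i, d i * b i i := by
    simp [inner_eq_sum, diagonal_apply]
  have norm_diag : ‖diagonal d‖ ^ 2 = ∑ i, d i ^ 2 := by
    rw [frobenius_norm_diagonal, EuclideanSpace.norm_sq_eq]
    simp
  set D := ∑ i, d i ^ 2
  have diag_le : (∑ i, d i * b i i) ^ 2 ≤ D * ∑ i, b i i ^ 2 := sum_mul_sq_le_sq_mul_sq _ _ _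
  have offdiag_le (i j : ι) :
      ((d i - d j) * b i j) ^ 2 + (if i = j then 2 * (D * b i j ^ 2) else 0)
        ≤ 2 * (D * b i j ^ 2) := by
    split_ifs with hij
    · simp [hij]
    · have pair_le : d i ^ 2 + d j ^ 2 ≤ D := by
        rw [← sum_pair (f := fun k => d k ^ 2) hij]
        exact sum_le_sum_of_subset_of_nonneg (subset_univ _) fun _ _ _ => sq_nonneg _
      have gap_le : (d i - d j) ^ 2 ≤ 2 * D := by linarith [sq_nonneg (d i + d j)]
      rw [add_zero, mul_pow, ← mul_assoc]
      gcongr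
  have sum_le := sum_le_sum fun i (_ : i ∈ univ) => sum_le_sum fun j (_ : j ∈ univ) =>
    offdiag_le i j
  simp only [sum_add_distrib, sum_ite_eq, mem_univ, if_true, ← mul_sum] at sum_le
  simp only [norm_sq_eq_sum ⁅_, b⁆, lie_apply, inner_diag, norm_diag, norm_sq_eq_sum b]
  linarith

end Diagonalization

/-- A refinement of the Böttcher–Wenzel inequality `‖⁅a, b⁆‖² ≤ 2 ‖a‖² ‖b‖²`. Everything is
invariant under orthogonal conjugation, so `a` may be taken diagonal. -/
lemma norm_lie_sq_add_inner_sq_le {a : Matrix ι ι ℝ} (ha : a.IsSymm) (b : Matrix ι ι ℝ) :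
    ‖⁅a, b⁆‖ ^ 2 + 2 * ⟪a, b⟫ ^ 2 ≤ 2 * (‖a‖ ^ 2 * ‖b‖ ^ 2) := by
  classical
  have hA : a.IsHermitian := isHermitian_iff_isSymm.2 ha
  let φ := Unitary.conjStarAlgAut ℝ (Matrix ι ι ℝ) (star hA.eigenvectorUnitary)
  have φ_a : φ a = diagonal hA.eigenvalues := hA.conjStarAlgAut_star_eigenvectorUnitary
  have φ_lie : φ ⁅a, b⁆ = ⁅diagonal hA.eigenvalues, φ b⁆ := by
    simp only [Ring.lie_def, map_sub, map_mul, φ_a]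
  have h := norm_lie_diagonal_sq_add_inner_sq_le hA.eigenvalues (φ b)
  rw [← φ_lie, ← φ_a] at h
  simpa only [φ, norm_conjStarAlgAut, inner_conjStarAlgAut] using h

lemma inner_sq_add_norm_lie_sq_le {a : Matrix ι ι ℝ} (ha : a.IsSymm) (b : Matrix ι ι ℝ) :
    ⟪a, b⟫ ^ 2 + ‖⁅a, b⁆‖ ^ 2 ≤ 2 * (‖a‖ ^ 2 * ‖b‖ ^ 2) := by
  linarith [norm_lie_sq_add_inner_sq_le ha b, sq_nonneg ⟪a, b⟫]

section TraceFree

variable [DecidableEq ι]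

/-- The trace-free part of a square matrix. The junk value of the division by the size is harmless
for empty matrices, where the trace vanishes. -/
noncomputable def traceFree (a : Matrix ι ι ℝ) : Matrix ι ι ℝ :=
  a - (trace a / Fintype.card ι) • 1

lemma isSymm_traceFree {a : Matrix ι ι ℝ} (ha : a.IsSymm) : (traceFree a).IsSymm :=
  ha.sub (isSymm_one.smul _)

lemma one_inner (a : Matrix ι ι ℝ) : ⟪1, a⟫ = trace a := by
  simp [inner_eq_trace, star_eq_conjTranspose]

lemma inner_traceFree (a : Matrix ι ι ℝ) {b : Matrix ι ι ℝ} (hb : trace b = 0) :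
    ⟪traceFree a, b⟫ = ⟪a, b⟫ := by
  rw [traceFree, inner_sub_left, real_inner_smul_left, one_inner, hb, mul_zero, sub_zero]

lemma lie_traceFree (a b : Matrix ι ι ℝ) : ⁅traceFree a, b⁆ = ⁅a, b⁆ := by
  simp [traceFree, Ring.lie_def, sub_mul, mul_sub]

lemma norm_traceFree_sq (a : Matrix ι ι ℝ) :
    ‖traceFree a‖ ^ 2 = ‖a‖ ^ 2 - trace a ^ 2 / Fintype.card ι := by
  have norm_one : ‖(1 : Matrix ι ι ℝ)‖ ^ 2 = Fintype.card ι := by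
    rw [← real_inner_self_eq_norm_sq, one_inner, trace_one]
  rw [traceFree, norm_sub_sq_real, real_inner_smul_right, real_inner_comm, one_inner, norm_smul,
    mul_pow, norm_one, Real.norm_eq_abs, sq_abs]
  rcases eq_or_ne (Fintype.card ι : ℝ) 0 with card_eq | card_ne
  · simp [card_eq]
  · field_simp
    ring

end TraceFree

/-- The term `R₁` of the evolution equation `∂ₜ|A|² = Δ|A|² - 2|∇A|² + 2R₁` of the second
fundamental form under mean curvature flow, `h α` being its components in an orthonormal normal
frame. -/
noncomputable def secondFormReaction (h : κ → Matrix ι ι ℝ) : ℝ :=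
  ∑ α, ∑ β, (⟪h α, h β⟫ ^ 2 + ‖⁅h α, h β⁆‖ ^ 2)

/-- The term `R₂` of the evolution equation `∂ₜ|H|² = Δ|H|² - 2|∇H|² + 2R₂` of the mean curvature
`H α = tr (h α)` under mean curvature flow. -/
noncomputable def meanCurvatureReaction (h : κ → Matrix ι ι ℝ) : ℝ :=
  ‖∑ α, trace (h α) • h α‖ ^ 2

lemma secondFormReaction_le {h : κ → Matrix ι ι ℝ} (hsym : ∀ α, (h α).IsSymm) :
    secondFormReaction h ≤ 2 * (∑ α, ‖h α‖ ^ 2) ^ 2 := by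
  simp_rw [sq (∑ α, ‖h α‖ ^ 2), sum_mul_sum, mul_sum]
  exact sum_le_sum fun α _ => sum_le_sum fun β _ => inner_sq_add_norm_lie_sq_le (hsym α) (h β)

lemma trace_smul_add (r : ℝ) (a : Matrix ι ι ℝ) {b : Matrix ι ι ℝ} (hb : trace b = 0) :
    trace (r • a + b) = r * trace a := by
  rw [trace_add, trace_smul, hb, add_zero, smul_eq_mul]

section PrincipalSplitting

variable {u : κ → ℝ} {a : Matrix ι ι ℝ} {g : κ → Matrix ι ι ℝ}

lemma secondFormReaction_smul_add (hu : ∑ α, u α ^ 2 = 1) (hug : ∑ α, u α • g α = 0) :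
    secondFormReaction (fun α => u α • a + g α)
      = ‖a‖ ^ 4 + 2 * ∑ α, (⟪a, g α⟫ ^ 2 + ‖⁅a, g α⁆‖ ^ 2) + secondFormReaction g := by
  have inner_part := sum_sum_norm_sq_map₂_smul_add hu (innerₗ (Matrix ι ι ℝ)) a hug
  have lie_part := sum_sum_norm_sq_map₂_smul_add hu
    (LinearMap.mul ℝ (Matrix ι ι ℝ) - (LinearMap.mul ℝ (Matrix ι ι ℝ)).flip) a hug
  simp only [innerₗ_apply_apply, Real.norm_eq_abs, sq_abs, real_inner_self_eq_norm_sq,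
    real_inner_comm a] at inner_part
  have norm_lie_swap (α : κ) : ‖⁅g α, a⁆‖ = ‖⁅a, g α⁆‖ := by
    rw [Ring.lie_def, norm_sub_rev, Ring.lie_def]
  simp only [LinearMap.sub_apply, LinearMap.flip_apply, LinearMap.mul_apply', sub_self, norm_zero,
    ← Ring.lie_def, norm_lie_swap] at lie_part
  simp only [secondFormReaction, sum_add_distrib, inner_part, lie_part]
  ring

lemma secondFormReaction_smul_add_le [DecidableEq ι] (hu : ∑ α, u α ^ 2 = 1)
    (hug : ∑ α, u α • g α = 0) (ha : a.IsSymm) (hg : ∀ α, (g α).IsSymm)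
    (htr : ∀ α, trace (g α) = 0) :
    secondFormReaction (fun α => u α • a + g α)
      ≤ ‖a‖ ^ 4 + 4 * ‖traceFree a‖ ^ 2 * ∑ α, ‖g α‖ ^ 2 + 2 * (∑ α, ‖g α‖ ^ 2) ^ 2 := by
  have mixed_le : ∑ α, (⟪a, g α⟫ ^ 2 + ‖⁅a, g α⁆‖ ^ 2)
      ≤ 2 * ‖traceFree a‖ ^ 2 * ∑ α, ‖g α‖ ^ 2 := by
    rw [mul_sum]
    refine sum_le_sum fun α _ => ?_
    rw [← inner_traceFree a (htr α), ← lie_traceFree a, mul_assoc]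
    exact inner_sq_add_norm_lie_sq_le (isSymm_traceFree ha) (g α)
  rw [secondFormReaction_smul_add hu hug]
  linarith [secondFormReaction_le hg]

lemma sum_trace_smul_add_sq (hu : ∑ α, u α ^ 2 = 1) (htr : ∀ α, trace (g α) = 0) :
    ∑ α, trace (u α • a + g α) ^ 2 = trace a ^ 2 := by
  simp_rw [trace_smul_add _ _ (htr _), mul_pow, ← sum_mul, hu, one_mul]

lemma meanCurvatureReaction_smul_add (hu : ∑ α, u α ^ 2 = 1) (hug : ∑ α, u α • g α = 0)
    (htr : ∀ α, trace (g α) = 0) :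
    meanCurvatureReaction (fun α => u α • a + g α) = trace a ^ 2 * ‖a‖ ^ 2 := by
  have H_smul_h : ∑ α, trace (u α • a + g α) • (u α • a + g α) = trace a • a :=
    calc ∑ α, trace (u α • a + g α) • (u α • a + g α)
        = trace a • ((∑ α, u α ^ 2) • a + ∑ α, u α • g α) := by
          simp_rw [trace_smul_add _ _ (htr _), sum_smul, ← sum_add_distrib, smul_sum]
          exact sum_congr rfl fun α _ => by module
      _ = trace a • a := by rw [hu, hug, one_smul, add_zero]
  rw [meanCurvatureReaction, H_smul_h, norm_smul, mul_pow, Real.norm_eq_abs, sq_abs]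

lemma secondFormReaction_smul_add_le_mul_of_pinched (hu : ∑ α, u α ^ 2 = 1)
    (hug : ∑ α, u α • g α = 0) (ha : a.IsSymm) (hg : ∀ α, (g α).IsSymm)
    (htr : ∀ α, trace (g α) = 0) {c : ℝ} (hc : c ≤ 4 / (3 * Fintype.card ι))
    (hpinch : ∑ α, ‖u α • a + g α‖ ^ 2 ≤ c * ∑ α, trace (u α • a + g α) ^ 2) :
    secondFormReaction (fun α => u α • a + g α)
      ≤ c * meanCurvatureReaction (fun α => u α • a + g α) := by
  classical
  have reaction_le := secondFormReaction_smul_add_le hu hug ha hg htr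
  rw [norm_traceFree_sq] at reaction_le
  rw [meanCurvatureReaction_smul_add hu hug htr]
  rw [sum_norm_sq_smul_add hu a hug, sum_trace_smul_add_sq hu htr] at hpinch
  have hc_trace : c * trace a ^ 2 ≤ 4 / 3 * (trace a ^ 2 / Fintype.card ι) :=
    calc c * trace a ^ 2 ≤ 4 / (3 * Fintype.card ι) * trace a ^ 2 := by gcongr
      _ = 4 / 3 * (trace a ^ 2 / Fintype.card ι) := by ring
  have hz : 0 ≤ ∑ α, ‖g α‖ ^ 2 := sum_nonneg fun _ _ => sq_nonneg _
  set x := ‖a‖ ^ 2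
  set y := trace a ^ 2 / Fintype.card ι
  set z := ∑ α, ‖g α‖ ^ 2
  calc secondFormReaction (fun α => u α • a + g α)
      ≤ x ^ 2 + 4 * (x - y) * z + 2 * z ^ 2 := by rwa [← pow_mul]
    _ = (x + z) * x + z * (3 * (x + z) - 4 * y) - z ^ 2 := by ring
    _ ≤ c * trace a ^ 2 * x + 0 - 0 := by
        gcongr
        · exact mul_nonpos_of_nonneg_of_nonpos hz (by linarith)
        · positivity
    _ = c * (trace a ^ 2 * x) := by ring

end PrincipalSplitting

lemma exists_eq_smul_add {h : κ → Matrix ι ι ℝ} (hsym : ∀ α, (h α).IsSymm)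
    (hH : ∑ α, trace (h α) ^ 2 ≠ 0) :
    ∃ (u : κ → ℝ) (a : Matrix ι ι ℝ) (g : κ → Matrix ι ι ℝ),
      ∑ α, u α ^ 2 = 1 ∧ ∑ α, u α • g α = 0 ∧ a.IsSymm ∧ (∀ α, (g α).IsSymm) ∧
        (∀ α, trace (g α) = 0) ∧ h = fun α => u α • a + g α := by
  have hH_nonneg : 0 ≤ ∑ α, trace (h α) ^ 2 := sum_nonneg fun _ _ => sq_nonneg _
  set s := √(∑ α, trace (h α) ^ 2)
  have hs_sq : s ^ 2 = ∑ α, trace (h α) ^ 2 := Real.sq_sqrt hH_nonneg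
  have hs : s ≠ 0 := (Real.sqrt_ne_zero hH_nonneg).2 hH
  let u α := trace (h α) / s
  let a := ∑ α, u α • h α
  have hu : ∑ α, u α ^ 2 = 1 := by
    simp_rw [u, div_pow, ← sum_div, ← hs_sq, div_self (pow_ne_zero 2 hs)]
  have ha : a.IsSymm := by
    simp_rw [IsSymm, a, transpose_sum, transpose_smul, (hsym _).eq]
  have trace_a : trace a = s := by
    simp_rw [a, u, trace_sum, trace_smul, smul_eq_mul, div_mul_eq_mul_div, ← sq, ← sum_div,
      ← hs_sq]
    field_simp
  refine ⟨u, a, fun α => h α - u α • a, hu, ?_, ha, fun α => (hsym α).sub (ha.smul _),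
    fun α => ?_, funext fun α => (add_sub_cancel _ _).symm⟩
  · simp_rw [smul_sub, sum_sub_distrib, smul_smul, ← sum_smul, ← sq, hu, one_smul]
    exact sub_self a
  · rw [trace_sub, trace_smul, trace_a, smul_eq_mul, div_mul_cancel₀ _ hs, sub_self]

lemma secondFormReaction_eq_sum {h : κ → Matrix ι ι ℝ} (hsym : ∀ α, (h α).IsSymm) :
    secondFormReaction h = (∑ α, ∑ β, (∑ i, ∑ j, h α i j * h β i j) ^ 2)
      + ∑ i, ∑ j, ∑ α, ∑ β, (∑ p, (h α i p * h β j p - h β i p * h α j p)) ^ 2 := by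
  have lie_apply (α β : κ) (i j : ι) :
      ⁅h α, h β⁆ i j = ∑ p, (h α i p * h β j p - h β i p * h α j p) := by
    simp only [Ring.lie_def, Matrix.sub_apply, mul_apply, sum_sub_distrib, (hsym _).apply _ j]
  simp only [secondFormReaction, sum_add_distrib, inner_eq_sum, norm_sq_eq_sum, lie_apply]
  congr 1
  exact (sum_congr rfl fun α _ => sum_comm_cycle.symm).trans sum_comm_cycle.symm

lemma meanCurvatureReaction_eq_sum (h : κ → Matrix ι ι ℝ) :
    meanCurvatureReaction h = ∑ i, ∑ j, (∑ α, trace (h α) * h α i j) ^ 2 := by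
  simp only [meanCurvatureReaction, norm_sq_eq_sum, Matrix.sum_apply,
    Matrix.smul_apply, smul_eq_mul]

end Pinching

open Pinching

theorem stmt1_general {ι κ : Type*} [Fintype ι] [Fintype κ]
    (h : κ → Matrix ι ι ℝ) (hsym : ∀ α, (h α).IsSymm)
    {c : ℝ} (hc : c ≤ 4 / (3 * Fintype.card ι))
    (hpinch : ∑ α, ‖h α‖ ^ 2 ≤ c * ∑ α, trace (h α) ^ 2) :
    secondFormReaction h ≤ c * meanCurvatureReaction h := by
  by_cases hH : ∑ α, trace (h α) ^ 2 = 0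
  · have hA : ∑ α, ‖h α‖ ^ 2 ≤ 0 := by simpa only [hH, mul_zero] using hpinch
    have meanCurvatureReaction_eq : meanCurvatureReaction h = 0 := by
      have hzero (α : κ) : trace (h α) = 0 := by
        simpa using (sum_eq_zero_iff_of_nonneg fun _ _ => sq_nonneg _).1 hH α (mem_univ α)
      simp [meanCurvatureReaction, hzero]
    have sum_norm_eq := hA.antisymm (sum_nonneg fun _ _ => sq_nonneg _)
    simpa only [sum_norm_eq, meanCurvatureReaction_eq, mul_zero, zero_pow two_ne_zero] using
      secondFormReaction_le hsym
  · obtain ⟨u, a, g, hu, hug, ha, hg, htr, rfl⟩ := exists_eq_smul_add hsym hH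
    exact secondFormReaction_smul_add_le_mul_of_pinched hu hug ha hg htr hc hpinch

/-- Reaction-term inequality: if `|A|² ≤ c|H|²` with `0 < c ≤ 4/(3n)`, then `R₁ ≤ c R₂`. -/
theorem stmt1 (n m : ℕ) (hn : 2 ≤ n) (hm : 1 ≤ m)
    (h : Fin m → Matrix (Fin n) (Fin n) ℝ) (hsym : ∀ α, (h α).IsSymm)
    (c : ℝ) (hc0 : 0 < c) (hc : c ≤ 4 / (3 * (n : ℝ)))
    (hpinch : (∑ α, ∑ i, ∑ j, (h α i j) ^ 2) ≤ c * ∑ α, (Matrix.trace (h α)) ^ 2) :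
    (∑ α, ∑ β, (∑ i, ∑ j, h α i j * h β i j) ^ 2)
      + (∑ i, ∑ j, ∑ α, ∑ β, (∑ p, (h α i p * h β j p - h β i p * h α j p)) ^ 2)
      ≤ c * ∑ i, ∑ j, (∑ α, Matrix.trace (h α) * h α i j) ^ 2 := by
  simpa only [secondFormReaction_eq_sum hsym, meanCurvatureReaction_eq_sum] using
    stmt1_general h hsym (by rwa [Fintype.card_fin]) (by simpa only [norm_sq_eq_sum])
end

section
/- Let n ≥ 2, m ≥ 1, and let (h_α)_{α ∈ Fin m} be symmetric real n×n matrices with H_α := tr h_α, |H|² := Σ_α H_α² > 0, |A|² := Σ_α Σ_{i,j} ((h_α)_{ij})². Let a ≥ 0 and 1/n < c ≤ 4/(3n), and set Q := |A|² + a − c|H|². Define A₁ := Σ_α (H_α/|H|)·h_α, |A₋|² := Σ_α ‖h_α − (H_α/|H|)·A₁‖² (which equals |A|² − |A₁|²), Å₁ := A₁ − (|H|/n)·I (the trace-free part of A₁, since tr A₁ = |H|), |Å₁|² its squared Frobenius norm, and |Å₋|² := |A₋|² (the components of h orthogonal to the mean curvature direction are trace free). With R₁ := Σ_{α,β} (Σ_{i,j}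 (h_α)_{ij}(h_β)_{ij})² + Σ_{i,j,α,β} (Σ_p ((h_α)_{ip}(h_β)_{jp} − (h_β)_{ip}(h_α)_{jp}))² and R₂ := Σ_{i,j} (Σ_α H_α (h_α)_{ij})², if Q ≤ 0 then 2R₁ − 2cR₂ ≤ 2|A₁|²·Q − 2a|A₁|² − (2a/(n(c−1/n)))·|Å₋|² + (2/(n(c−1/n)))·|A₋|²·Q + (6 − 2/(n(c−1/n)))·|Å₁|²·|Å₋|² + (3 − 2/(n(c−1/n)))·|Å₋|⁴, and this right-hand side is ≤ 0. -/
/-!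
Decompose the second fundamental form as `h_α = u_α A₁ + k_α`, where `u = H / |H|` and the `k_α`
are the components of `A₋`. For each bilinear map `f` the cross terms of `∑ |f(h_α, h_β)|²` vanish
because `∑ u_α k_α = 0`. Applied to the inner product and to the Lie bracket, this writes `R₁` as
the sum of `|A₁|⁴`, mixed terms in `A₁` and `k_α`, and the reaction term of `A₋`. The `k_α` are
trace free, so `A₁` may be replaced by `Å₁` in the mixed terms, which are bounded by
`⟨X, Y⟩² + |[X, Y]|² ≤ 2 |X|² |Y|²`. The reaction term of `A₋` is at most `3/2 |A₋|⁴` by the Li–Li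
inequality. The claimed bound is what this gives, rewritten in terms of `Q`, and it is nonpositive
since `n c - 1 ≤ 1/3`.

For the Li–Li inequality, rotate the normal frame so that the matrices become orthogonal, and let
the largest of them be diagonal with entries `d`. Its brackets with the others weight their
off-diagonal entries by `(dᵢ - dⱼ)²`. The excesses of these weights over `∑ d²` have a total of at
most `2 ∑ d²`, while by Bessel's inequality the squares of the entries at any one off-diagonal
position add up to at most half of the largest remaining squared norm.
-/

open Finset Matrix
open scoped InnerProductSpace Matrix.Norms.Frobenius Matrix.Module

/-! ### Splitting a family along a unit vector of its index space -/

section Components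

variable {κ V W : Type*} [Fintype κ] [AddCommGroup V] [Module ℝ V] [AddCommGroup W] [Module ℝ W]

/-- The component of the family `w`, seen as an element of `ℝ^κ ⊗ V`, in the direction `u ∈ ℝ^κ`.
For the second fundamental form and `u = H / |H|` this is `A₁`. -/
def componentAlong (u : κ → ℝ) (w : κ → V) : V := ∑ α, u α • w α

/-- What remains of the family `w` once its component in the direction `u` is removed. For the
second fundamental form and `u = H / |H|` this is `A₋`. -/
def componentOrthogonal (u : κ → ℝ) (w : κ → V) (α : κ) : V := w α - u α • componentAlong u w

theorem componentAlong_map (f : V →ₗ[ℝ] W) (u : κ → ℝ) (w : κ → V) :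
    componentAlong u (fun α => f (w α)) = f (componentAlong u w) := by
  simp only [componentAlong, map_sum, map_smul]

theorem componentOrthogonal_map (f : V →ₗ[ℝ] W) (u : κ → ℝ) (w : κ → V) (α : κ) :
    componentOrthogonal u (fun β => f (w β)) α = f (componentOrthogonal u w α) := by
  simp only [componentOrthogonal, componentAlong_map, map_sub, map_smul]

end Components

section InnerProduct

variable {κ V E : Type*} [Fintype κ] [NormedAddCommGroup V] [InnerProductSpace ℝ V]
  [NormedAddCommGroup E] [InnerProductSpace ℝ E]

theorem sum_norm_sq_eq_componentAlong_add_componentOrthogonal {u : κ → ℝ}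
    (hu : ∑ α, u α ^ 2 = 1) (w : κ → V) :
    ∑ α, ‖w α‖ ^ 2 = ‖componentAlong u w‖ ^ 2 + ∑ α, ‖componentOrthogonal u w α‖ ^ 2 := by
  have expand (α : κ) : ‖componentOrthogonal u w α‖ ^ 2 = ‖w α‖ ^ 2
      - 2 * ⟪u α • w α, componentAlong u w⟫_ℝ + u α ^ 2 * ‖componentAlong u w‖ ^ 2 := by
    rw [componentOrthogonal, norm_sub_sq_real, norm_smul, mul_pow, Real.norm_eq_abs, sq_abs,
      real_inner_smul_left, real_inner_smul_right]
  have hinner : ∑ α, ⟪u α • w α, componentAlong u w⟫_ℝ = ‖componentAlong u w‖ ^ 2 := by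
    rw [← sum_inner, ← real_inner_self_eq_norm_sq]
    rfl
  simp only [expand, sum_add_distrib, sum_sub_distrib, ← mul_sum, ← sum_mul, hinner, hu]
  ring

theorem sum_sum_norm_sq_apply_eq_components (f : V →ₗ[ℝ] V →ₗ[ℝ] E) {u : κ → ℝ}
    (hu : ∑ α, u α ^ 2 = 1) (w : κ → V) :
    ∑ α, ∑ β, ‖f (w α) (w β)‖ ^ 2
      = ‖f (componentAlong u w) (componentAlong u w)‖ ^ 2
        + ∑ α, ‖f (componentOrthogonal u w α) (componentAlong u w)‖ ^ 2
        + ∑ β, ‖f (componentAlong u w) (componentOrthogonal u w β)‖ ^ 2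
        + ∑ α, ∑ β, ‖f (componentOrthogonal u w α) (componentOrthogonal u w β)‖ ^ 2 := by
  have split (g : V →ₗ[ℝ] E) : ∑ α, ‖g (w α)‖ ^ 2 = ‖g (componentAlong u w)‖ ^ 2
      + ∑ α, ‖g (componentOrthogonal u w α)‖ ^ 2 := by
    rw [sum_norm_sq_eq_componentAlong_add_componentOrthogonal hu, componentAlong_map]
    simp only [componentOrthogonal_map]
  have split_left (v : V) := split (f.flip v)
  simp only [LinearMap.flip_apply] at split_left
  simp only [fun α => split (f (w α)), sum_add_distrib, split_left]
  rw [sum_comm]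
  simp only [split_left, sum_add_distrib]
  rw [sum_comm (f := fun β α => ‖f (componentOrthogonal u w α) (componentOrthogonal u w β)‖ ^ 2),
    ← add_assoc]

theorem sum_inner_sq_le_of_pairwise_orthogonal {κ : Type*} {w : κ → V} {s : Finset κ}
    (horth : (s : Set κ).Pairwise fun α β => ⟪w α, w β⟫_ℝ = 0) {x : ℝ} (hx₀ : 0 ≤ x)
    (hx : ∀ α ∈ s, ‖w α‖ ^ 2 ≤ x) (v : V) :
    ∑ α ∈ s, ⟪w α, v⟫_ℝ ^ 2 ≤ x * ‖v‖ ^ 2 := by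
  set p := ∑ α ∈ s, ⟪w α, v⟫_ℝ • w α with hp
  have hpv : ⟪p, v⟫_ℝ = ∑ α ∈ s, ⟪w α, v⟫_ℝ ^ 2 := by
    simp only [hp, sum_inner, real_inner_smul_left, sq]
  have hpp : ‖p‖ ^ 2 ≤ x * ⟪p, v⟫_ℝ := by
    have hinner (α) (hα : α ∈ s) : ⟪w α, p⟫_ℝ = ⟪w α, v⟫_ℝ * ‖w α‖ ^ 2 := by
      simp only [hp, inner_sum, real_inner_smul_right]
      rw [sum_eq_single_of_mem α hα fun β hβ h => by rw [horth hα hβ h.symm, mul_zero],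
        real_inner_self_eq_norm_sq]
    rw [hpv, ← real_inner_self_eq_norm_sq, hp, sum_inner, ← hp, mul_sum]
    refine sum_le_sum fun α hα => ?_
    rw [real_inner_smul_left, hinner α hα]
    nlinarith [hx α hα, sq_nonneg ⟪w α, v⟫_ℝ]
  have hcs : ⟪p, v⟫_ℝ ^ 2 ≤ ‖p‖ ^ 2 * ‖v‖ ^ 2 := by
    rw [← mul_pow]
    exact sq_le_sq.2 ((abs_real_inner_le_norm p v).trans (le_abs_self _))
  rw [← hpv]
  by_contra! hlt
  have hpos : 0 < ⟪p, v⟫_ℝ := (by positivity : 0 ≤ x * ‖v‖ ^ 2).trans_lt hlt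
  nlinarith [mul_le_mul_of_nonneg_right hpp (sq_nonneg ‖v‖), mul_lt_mul_of_pos_left hlt hpos]

end InnerProduct

/-! ### The Frobenius inner product and the Lie bracket of matrices -/

/-- The Frobenius inner product `⟪X, Y⟫ = ∑ Xᵢⱼ Yᵢⱼ`, which induces Mathlib's Frobenius norm. -/
noncomputable local instance frobeniusInnerProductSpace {ι κ : Type*} [Fintype ι]
    [Fintype κ] : InnerProductSpace ℝ (Matrix ι κ ℝ) where
  inner X Y := ∑ i, ∑ j, X i j * Y i j
  norm_sq_eq_re_inner X := by
    rw [frobenius_norm_def, ← Real.sqrt_eq_rpow, Real.sq_sqrt (by positivity)]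
    simp [← sq]
  conj_inner_symm X Y := by simp [mul_comm]
  add_left X Y Z := by simp [add_mul, sum_add_distrib]
  smul_left X Y r := by simp [mul_sum, mul_assoc]

section Frobenius

variable {ι κ : Type*} [Fintype ι] [Fintype κ]

theorem frobenius_inner_def (X Y : Matrix ι κ ℝ) : ⟪X, Y⟫_ℝ = ∑ i, ∑ j, X i j * Y i j := rfl

theorem frobenius_norm_sq (X : Matrix ι κ ℝ) : ‖X‖ ^ 2 = ∑ i, ∑ j, X i j ^ 2 := by
  rw [← real_inner_self_eq_norm_sq, frobenius_inner_def]
  simp only [sq]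

theorem frobenius_inner_eq_trace (X Y : Matrix ι κ ℝ) : ⟪X, Y⟫_ℝ = trace (Xᵀ * Y) := by
  simp only [frobenius_inner_def, trace, diag_apply, mul_apply, transpose_apply]
  exact sum_comm

variable [DecidableEq ι]

theorem inner_single_right [DecidableEq κ] (X : Matrix ι κ ℝ) (i : ι) (j : κ) (r : ℝ) :
    ⟪X, single i j r⟫_ℝ = X i j * r := by
  simp [frobenius_inner_def, single_apply, ite_and]

theorem norm_sq_diagonal (d : ι → ℝ) : ‖diagonal d‖ ^ 2 = ∑ i, d i ^ 2 := by
  rw [frobenius_norm_diagonal, EuclideanSpace.real_norm_sq_eq]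

theorem inner_diagonal_left (d : ι → ℝ) (Y : Matrix ι ι ℝ) :
    ⟪diagonal d, Y⟫_ℝ = ∑ i, d i * Y i i := by
  simp [frobenius_inner_def, diagonal_apply]

theorem norm_sq_lie_diagonal (d : ι → ℝ) (Y : Matrix ι ι ℝ) :
    ‖⁅diagonal d, Y⁆‖ ^ 2 = ∑ i, ∑ j, (d i - d j) ^ 2 * Y i j ^ 2 := by
  simp only [frobenius_norm_sq, Ring.lie_def, Matrix.sub_apply, diagonal_mul, mul_diagonal]
  exact sum_congr rfl fun i _ => sum_congr rfl fun j _ => by ring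

theorem exists_conjStarAlgAut_eq_diagonal {X : Matrix ι ι ℝ} (hX : X.IsSymm) :
    ∃ (U : unitary (Matrix ι ι ℝ)) (d : ι → ℝ), Unitary.conjStarAlgAut ℝ _ U X = diagonal d :=
  ⟨_, _, (isHermitian_iff_isSymm.2 hX).conjStarAlgAut_star_eigenvectorUnitary⟩

theorem isSymm_conjStarAlgAut (U : unitary (Matrix ι ι ℝ)) {X : Matrix ι ι ℝ} (hX : X.IsSymm) :
    (Unitary.conjStarAlgAut ℝ _ U X).IsSymm :=
  isHermitian_iff_isSymm.1
    ((isHermitian_iff_isSymm.2 hX).isSelfAdjoint.map (Unitary.conjStarAlgAut ℝ _ U))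

theorem lie_conjStarAlgAut (U : unitary (Matrix ι ι ℝ)) (X Y : Matrix ι ι ℝ) :
    ⁅Unitary.conjStarAlgAut ℝ _ U X, Unitary.conjStarAlgAut ℝ _ U Y⁆
      = Unitary.conjStarAlgAut ℝ _ U ⁅X, Y⁆ := by
  simp only [Ring.lie_def, map_sub, map_mul]

theorem inner_conjStarAlgAut (U : unitary (Matrix ι ι ℝ)) (X Y : Matrix ι ι ℝ) :
    ⟪Unitary.conjStarAlgAut ℝ _ U X, Unitary.conjStarAlgAut ℝ _ U Y⟫_ℝ = ⟪X, Y⟫_ℝ := by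
  simp only [frobenius_inner_eq_trace, ← conjTranspose_eq_transpose_of_trivial,
    ← star_eq_conjTranspose, ← map_star, ← map_mul]
  rw [Unitary.conjStarAlgAut_apply, trace_mul_comm, ← Matrix.mul_assoc,
    Unitary.coe_star_mul_self, Matrix.one_mul]

theorem norm_conjStarAlgAut (U : unitary (Matrix ι ι ℝ)) (X : Matrix ι ι ℝ) :
    ‖Unitary.conjStarAlgAut ℝ _ U X‖ = ‖X‖ := by
  rw [norm_eq_sqrt_real_inner, inner_conjStarAlgAut, ← norm_eq_sqrt_real_inner]

end Frobenius

/-! ### Change of frame -/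

section Frame

variable {κ V E : Type*} [Fintype κ] [DecidableEq κ] [NormedAddCommGroup V]
  [InnerProductSpace ℝ V] [NormedAddCommGroup E] [InnerProductSpace ℝ E]

theorem gram_smul (U : Matrix κ κ ℝ) (w : κ → V) : gram ℝ (U • w) = U * gram ℝ w * Uᵀ := by
  ext γ δ
  simp only [gram_apply, Matrix.Module.smul_apply, sum_inner, inner_sum, real_inner_smul_left,
    real_inner_smul_right, mul_apply, sum_mul, transpose_apply]
  exact sum_congr rfl fun _ _ => sum_congr rfl fun _ _ => by ring

theorem gram_unitary_smul (U : unitary (Matrix κ κ ℝ)) (w : κ → V) :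
    gram ℝ ((U : Matrix κ κ ℝ) • w) = Unitary.conjStarAlgAut ℝ _ U (gram ℝ w) := by
  rw [gram_smul, Unitary.conjStarAlgAut_apply, star_eq_conjTranspose,
    conjTranspose_eq_transpose_of_trivial]

theorem exists_unitary_smul_pairwise_orthogonal (w : κ → V) :
    ∃ U : unitary (Matrix κ κ ℝ), Pairwise fun α β =>
      ⟪((U : Matrix κ κ ℝ) • w) α, ((U : Matrix κ κ ℝ) • w) β⟫_ℝ = 0 := by
  obtain ⟨U, d, hU⟩ :=
    exists_conjStarAlgAut_eq_diagonal (isHermitian_iff_isSymm.1 (isHermitian_gram ℝ w))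
  refine ⟨U, fun α β hαβ => ?_⟩
  have hgram := congrFun₂ (gram_unitary_smul U w) α β
  rwa [gram_apply, hU, diagonal_apply_ne _ hαβ] at hgram

theorem sum_norm_sq_unitary_smul (U : unitary (Matrix κ κ ℝ)) (w : κ → V) :
    ∑ α, ‖((U : Matrix κ κ ℝ) • w) α‖ ^ 2 = ∑ α, ‖w α‖ ^ 2 := by
  have trace_gram (v : κ → V) : ∑ α, ‖v α‖ ^ 2 = trace (gram ℝ v) := by simp [trace]
  rw [trace_gram, trace_gram, gram_unitary_smul, Unitary.conjStarAlgAut_apply, trace_mul_comm,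
    ← Matrix.mul_assoc, Unitary.coe_star_mul_self, Matrix.one_mul]

theorem sum_sum_norm_sq_apply_unitary_smul (f : V →ₗ[ℝ] V →ₗ[ℝ] E) (U : unitary (Matrix κ κ ℝ))
    (w : κ → V) :
    ∑ α, ∑ β, ‖f (((U : Matrix κ κ ℝ) • w) α) (((U : Matrix κ κ ℝ) • w) β)‖ ^ 2
      = ∑ α, ∑ β, ‖f (w α) (w β)‖ ^ 2 := by
  have rotate (g : V →ₗ[ℝ] E) :
      ∑ α, ‖g (((U : Matrix κ κ ℝ) • w) α)‖ ^ 2 = ∑ α, ‖g (w α)‖ ^ 2 := by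
    rw [← sum_norm_sq_unitary_smul U fun α => g (w α)]
    simp only [Matrix.Module.smul_apply, map_sum, map_smul]
  have rotate_left (v : V) := rotate (f.flip v)
  simp only [LinearMap.flip_apply] at rotate_left
  simp only [rotate]
  rw [sum_comm]
  simp only [rotate_left]
  exact sum_comm

end Frame

/-! ### The reaction term of a pair of matrices -/

theorem sq_add_sq_le_sum_sq {ι : Type*} [Fintype ι] (d : ι → ℝ) {i j : ι} (hij : i ≠ j) :
    d i ^ 2 + d j ^ 2 ≤ ∑ k, d k ^ 2 := by
  classical
  rw [← sum_pair (f := fun k => d k ^ 2) hij]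
  exact sum_le_univ_sum_of_nonneg fun _ => sq_nonneg _

section Interaction

variable {ι κ : Type*} [Fintype ι] [Fintype κ]

/-- The contribution `⟨X, Y⟩² + |[X, Y]|²` of a pair of components to the reaction term `R₁`. -/
noncomputable def interaction (X Y : Matrix ι ι ℝ) : ℝ := ⟪X, Y⟫_ℝ ^ 2 + ‖⁅X, Y⁆‖ ^ 2

theorem interaction_self (X : Matrix ι ι ℝ) : interaction X X = ‖X‖ ^ 4 := by
  simp only [interaction, Ring.lie_def, sub_self, norm_zero, real_inner_self_eq_norm_sq]
  ring

theorem interaction_comm (X Y : Matrix ι ι ℝ) : interaction X Y = interaction Y X := by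
  rw [interaction, interaction, real_inner_comm, Ring.lie_def, Ring.lie_def, norm_sub_rev]

/-- The Lie bracket of matrices as a bilinear map, the form in which the splitting and the change of
frame of a double sum apply to it. -/
noncomputable def lieBilin : Matrix ι ι ℝ →ₗ[ℝ] Matrix ι ι ℝ →ₗ[ℝ] Matrix ι ι ℝ :=
  LinearMap.mul ℝ _ - (LinearMap.mul ℝ _).flip

theorem interaction_eq_norm_sq_add_norm_sq (X Y : Matrix ι ι ℝ) :
    interaction X Y = ‖innerₗ _ X Y‖ ^ 2 + ‖lieBilin X Y‖ ^ 2 := by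
  rw [innerₗ_apply_apply, Real.norm_eq_abs, sq_abs]
  rfl

theorem sum_sum_interaction_unitary_smul [DecidableEq κ] (U : unitary (Matrix κ κ ℝ))
    (w : κ → Matrix ι ι ℝ) :
    ∑ α, ∑ β, interaction (((U : Matrix κ κ ℝ) • w) α) (((U : Matrix κ κ ℝ) • w) β)
      = ∑ α, ∑ β, interaction (w α) (w β) := by
  simp only [interaction_eq_norm_sq_add_norm_sq, sum_add_distrib,
    sum_sum_norm_sq_apply_unitary_smul]

theorem sum_sum_interaction_eq_components {u : κ → ℝ} (hu : ∑ α, u α ^ 2 = 1)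
    (w : κ → Matrix ι ι ℝ) :
    ∑ α, ∑ β, interaction (w α) (w β)
      = ‖componentAlong u w‖ ^ 4
        + 2 * ∑ α, interaction (componentAlong u w) (componentOrthogonal u w α)
        + ∑ α, ∑ β, interaction (componentOrthogonal u w α) (componentOrthogonal u w β) := by
  have hcomm : ∑ α, interaction (componentOrthogonal u w α) (componentAlong u w)
      = ∑ α, interaction (componentAlong u w) (componentOrthogonal u w α) :=
    sum_congr rfl fun _ _ => interaction_comm _ _
  rw [← interaction_self]
  simp only [interaction_eq_norm_sq_add_norm_sq, sum_add_distrib] at hcomm ⊢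
  linarith [sum_sum_norm_sq_apply_eq_components (innerₗ _) hu w,
    sum_sum_norm_sq_apply_eq_components lieBilin hu w]

variable [DecidableEq ι]

theorem interaction_conjStarAlgAut (U : unitary (Matrix ι ι ℝ)) (X Y : Matrix ι ι ℝ) :
    interaction (Unitary.conjStarAlgAut ℝ _ U X) (Unitary.conjStarAlgAut ℝ _ U Y)
      = interaction X Y := by
  rw [interaction, inner_conjStarAlgAut, lie_conjStarAlgAut, norm_conjStarAlgAut, interaction]

theorem interaction_diagonal_le (d : ι → ℝ) (Y : Matrix ι ι ℝ) :
    interaction (diagonal d) Y ≤ 2 * ‖diagonal d‖ ^ 2 * ‖Y‖ ^ 2 := by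
  have hdiag : ⟪diagonal d, Y⟫_ℝ ^ 2 ≤ ‖diagonal d‖ ^ 2 * ∑ i, Y i i ^ 2 := by
    rw [inner_diagonal_left, norm_sq_diagonal]
    exact sum_mul_sq_le_sq_mul_sq ..
  have hoff (i j : ι) : (d i - d j) ^ 2 * Y i j ^ 2
      ≤ 2 * ‖diagonal d‖ ^ 2 * (Y i j ^ 2 - if i = j then Y i j ^ 2 else 0) := by
    split_ifs with hij
    · simp [hij]
    · rw [sub_zero, norm_sq_diagonal]
      gcongr
      nlinarith [sq_add_sq_le_sum_sq d hij, sq_nonneg (d i + d j)]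
  have hlie : ‖⁅diagonal d, Y⁆‖ ^ 2 ≤ 2 * ‖diagonal d‖ ^ 2 * (‖Y‖ ^ 2 - ∑ i, Y i i ^ 2) := by
    rw [norm_sq_lie_diagonal]
    refine (sum_le_sum fun i _ => sum_le_sum fun j _ => hoff i j).trans_eq ?_
    simp only [← mul_sum, sum_sub_distrib, sum_ite_eq, mem_univ, if_true, frobenius_norm_sq]
  have : 0 ≤ ‖diagonal d‖ ^ 2 * ∑ i, Y i i ^ 2 := by positivity
  rw [interaction]
  linarith

theorem interaction_le {X : Matrix ι ι ℝ} (hX : X.IsSymm) (Y : Matrix ι ι ℝ) :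
    interaction X Y ≤ 2 * ‖X‖ ^ 2 * ‖Y‖ ^ 2 := by
  obtain ⟨U, d, hd⟩ := exists_conjStarAlgAut_eq_diagonal hX
  rw [← interaction_conjStarAlgAut U, ← norm_conjStarAlgAut U X, ← norm_conjStarAlgAut U Y, hd]
  exact interaction_diagonal_le d _

end Interaction

/-! ### Large differences of the entries of a vector -/

section Spread

theorem sum_sub_sq_le {ι : Type*} (s : Finset ι) (d : ι → ℝ) (x : ℝ) :
    ∑ j ∈ s, (x - d j) ^ 2 ≤ (#s + 1) * (x ^ 2 + ∑ j ∈ s, d j ^ 2) := by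
  have hexpand : ∑ j ∈ s, (x - d j) ^ 2
      = #s * x ^ 2 - 2 * x * ∑ j ∈ s, d j + ∑ j ∈ s, d j ^ 2 := by
    simp only [sub_sq, sum_add_distrib, sum_sub_distrib, sum_const, nsmul_eq_mul, ← mul_sum]
  have hcs : (∑ j ∈ s, d j) ^ 2 ≤ #s * ∑ j ∈ s, d j ^ 2 := sq_sum_le_card_mul_sum_sq
  rw [hexpand]
  nlinarith [sq_nonneg (x + ∑ j ∈ s, d j)]

theorem sum_sum_le_of_forall_ne_zero_eq_or_eq {ι κ : Type*} [Fintype ι] [Fintype κ]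
    {g : ι → κ → ℝ} {b : ℝ} (hb : 0 ≤ b) (hrow : ∀ i, ∑ j, g i j ≤ b)
    (hcol : ∀ j, ∑ i, g i j ≤ b)
    (hg : ∀ i j k l, g i j ≠ 0 → g k l ≠ 0 → i = k ∨ j = l) : ∑ i, ∑ j, g i j ≤ b := by
  by_cases hzero : ∀ i j, g i j = 0
  · simpa [hzero] using hb
  push Not at hzero
  obtain ⟨p, q, hpq⟩ := hzero
  by_cases hp : ∀ i j, g i j ≠ 0 → i = p
  · rw [sum_eq_single_of_mem p (mem_univ p)]
    · exact hrow p
    · exact fun i _ hi => sum_eq_zero fun j _ => not_not.1 fun h => hi (hp i j h)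
  · have hq (i j) (hij : g i j ≠ 0) : j = q := by grind
    rw [sum_comm, sum_eq_single_of_mem q (mem_univ q)]
    · exact hcol q
    · exact fun j _ hj => sum_eq_zero fun i _ => not_not.1 fun h => hj (hq i j h)

variable {ι : Type*} [Fintype ι]

/-- The amount by which `(dᵢ - dⱼ)²`, the weight of `Yᵢⱼ²` in `|[diag d, Y]|²`, exceeds `∑ d²`; it
is `0` if there is no excess. -/
def spreadExcess (d : ι → ℝ) (i j : ι) : ℝ := max ((d i - d j) ^ 2 - ∑ k, d k ^ 2) 0

theorem spreadExcess_nonneg (d : ι → ℝ) (i j : ι) : 0 ≤ spreadExcess d i j := le_max_right _ _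

theorem spreadExcess_comm (d : ι → ℝ) (i j : ι) : spreadExcess d i j = spreadExcess d j i := by
  rw [spreadExcess, spreadExcess, sub_sq_comm]

theorem sq_sub_le_sum_sq_add_spreadExcess (d : ι → ℝ) (i j : ι) :
    (d i - d j) ^ 2 ≤ ∑ k, d k ^ 2 + spreadExcess d i j := by
  rw [← sub_le_iff_le_add']
  exact le_max_left _ _

theorem spreadExcess_eq_zero_iff {d : ι → ℝ} {i j : ι} :
    spreadExcess d i j = 0 ↔ (d i - d j) ^ 2 ≤ ∑ k, d k ^ 2 := by
  rw [spreadExcess, max_eq_right_iff, sub_nonpos]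

theorem spreadExcess_self (d : ι → ℝ) (i : ι) : spreadExcess d i i = 0 := by
  rw [spreadExcess_eq_zero_iff, sub_self, zero_pow two_ne_zero]
  positivity

theorem sum_spreadExcess_le (d : ι → ℝ) (i : ι) : ∑ j, spreadExcess d i j ≤ ∑ k, d k ^ 2 := by
  classical
  set J : Finset ι := {j | ∑ k, d k ^ 2 < (d i - d j) ^ 2} with hJ
  have hi : i ∉ J := by
    rw [mem_filter_univ, sub_self, zero_pow two_ne_zero]
    exact not_lt_of_ge (by positivity)
  have hsum : ∑ j, spreadExcess d i j = ∑ j ∈ J, (d i - d j) ^ 2 - #J * ∑ k, d k ^ 2 := by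
    rw [← nsmul_eq_mul, ← sum_const, ← sum_sub_distrib, hJ, sum_filter]
    refine sum_congr rfl fun j _ => ?_
    split_ifs with h
    exacts [max_eq_left (sub_pos.2 h).le, spreadExcess_eq_zero_iff.2 (not_lt.1 h)]
  have hstar : d i ^ 2 + ∑ j ∈ J, d j ^ 2 ≤ ∑ k, d k ^ 2 := by
    rw [← sum_insert (f := fun k => d k ^ 2) hi]
    exact sum_le_univ_sum_of_nonneg fun _ => sq_nonneg _
  have := mul_le_mul_of_nonneg_left hstar (by positivity : (0 : ℝ) ≤ #J + 1)
  rw [hsum]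
  linarith [sum_sub_sq_le J d (d i)]

theorem mul_neg_of_spreadExcess_ne_zero {d : ι → ℝ} {i j : ι} (h : spreadExcess d i j ≠ 0) :
    d i * d j < 0 := by
  have hij : i ≠ j := by
    rintro rfl
    exact h (spreadExcess_self d i)
  rw [Ne, spreadExcess_eq_zero_iff, not_le] at h
  linarith [sq_add_sq_le_sum_sq d hij, sub_sq' (d i) (d j)]

theorem eq_or_eq_of_spreadExcess_ne_zero {d : ι → ℝ} {i j k l : ι} (hji : d j < d i)
    (hlk : d l < d k) (hij : spreadExcess d i j ≠ 0) (hkl : spreadExcess d k l ≠ 0) :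
    i = k ∨ j = l := by
  classical
  have hsign {x y : ℝ} (hyx : y < x) (hxy : x * y < 0) : 0 < x ∧ y < 0 := by
    rcases mul_neg_iff.1 hxy with h | h
    · exact h
    · linarith
  obtain ⟨hi, hj⟩ := hsign hji (mul_neg_of_spreadExcess_ne_zero hij)
  obtain ⟨hk, hl⟩ := hsign hlk (mul_neg_of_spreadExcess_ne_zero hkl)
  -- Otherwise `∑ d² < (dᵢ - dⱼ)² ≤ 2 (dᵢ² + dⱼ²)` and likewise for the disjoint pair `(k, l)`.
  by_contra! hne
  have hsum : d i ^ 2 + (d k ^ 2 + (d j ^ 2 + d l ^ 2)) ≤ ∑ p, d p ^ 2 := by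
    have hcross {p q : ι} (hp : 0 < d p) (hq : d q < 0) : p ≠ q := by
      rintro rfl
      linarith
    rw [← sum_pair (f := fun p => d p ^ 2) hne.2,
      ← sum_insert (f := fun p => d p ^ 2) (by simp [hcross hk hj, hcross hk hl]),
      ← sum_insert (f := fun p => d p ^ 2) (by simp [hne.1, hcross hi hj, hcross hi hl])]
    exact sum_le_univ_sum_of_nonneg fun _ => sq_nonneg _
  rw [Ne, spreadExcess_eq_zero_iff, not_le] at hij hkl
  nlinarith [sq_nonneg (d i + d j), sq_nonneg (d k + d l)]

theorem sum_sum_spreadExcess_le (d : ι → ℝ) :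
    ∑ i, ∑ j, spreadExcess d i j ≤ 2 * ∑ k, d k ^ 2 := by
  set g : ι → ι → ℝ := fun i j => if d j < d i then spreadExcess d i j else 0 with hg
  have hsplit (i j : ι) : spreadExcess d i j = g i j + g j i := by
    rcases lt_trichotomy (d i) (d j) with h | h | h
    · simp [hg, h, h.not_gt, spreadExcess_comm d j i]
    · simp [hg, h, spreadExcess_eq_zero_iff, sum_nonneg, sq_nonneg]
    · simp [hg, h, h.not_gt]
  have hg_le (i j : ι) : g i j ≤ spreadExcess d i j := by
    simp only [hg]
    split_ifs
    exacts [le_rfl, spreadExcess_nonneg d i j]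
  have hdirected : ∑ i, ∑ j, g i j ≤ ∑ k, d k ^ 2 := by
    refine sum_sum_le_of_forall_ne_zero_eq_or_eq (by positivity)
      (fun i => (sum_le_sum fun j _ => hg_le i j).trans (sum_spreadExcess_le d i))
      (fun j => (sum_le_sum fun i _ => (hg_le i j).trans_eq (spreadExcess_comm d i j)).trans
        (sum_spreadExcess_le d j)) fun i j k l hij hkl => ?_
    simp only [hg, ite_ne_right_iff] at hij hkl
    exact eq_or_eq_of_spreadExcess_ne_zero hij.1 hkl.1 hij.2 hkl.2
  simp only [hsplit, sum_add_distrib]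
  rw [sum_comm (f := fun i j => g j i)]
  linarith

end Spread

/-! ### Brackets with an orthogonal family -/

section OrthogonalFamily

variable {ι κ : Type*} [Fintype ι] [DecidableEq ι] {B : κ → Matrix ι ι ℝ} {s : Finset κ} {x : ℝ}

theorem two_mul_sum_apply_sq_le (hB : ∀ α ∈ s, (B α).IsSymm)
    (horth : (s : Set κ).Pairwise fun α β => ⟪B α, B β⟫_ℝ = 0) (hx₀ : 0 ≤ x)
    (hx : ∀ α ∈ s, ‖B α‖ ^ 2 ≤ x) {i j : ι} (hij : i ≠ j) : 2 * ∑ α ∈ s, B α i j ^ 2 ≤ x := by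
  set v : Matrix ι ι ℝ := single i j 1 + single j i 1 with hv
  have hinner (α) (hα : α ∈ s) : ⟪B α, v⟫_ℝ = 2 * B α i j := by
    rw [hv, inner_add_right, inner_single_right, inner_single_right, (hB α hα).apply i j]
    ring
  have hnorm : ‖v‖ ^ 2 = 2 := by
    rw [← real_inner_self_eq_norm_sq]
    nth_rw 2 [hv]
    rw [inner_add_right, inner_single_right, inner_single_right]
    simp [hv, hij, hij.symm]
    norm_num
  have hbessel := sum_inner_sq_le_of_pairwise_orthogonal horth hx₀ hx v
  rw [sum_congr rfl fun α hα => by rw [hinner α hα, mul_pow], ← mul_sum, hnorm] at hbessel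
  linarith

theorem sum_norm_sq_lie_diagonal_le (d : ι → ℝ) (hB : ∀ α ∈ s, (B α).IsSymm)
    (horth : (s : Set κ).Pairwise fun α β => ⟪B α, B β⟫_ℝ = 0) (hx₀ : 0 ≤ x)
    (hx : ∀ α ∈ s, ‖B α‖ ^ 2 ≤ x) :
    ∑ α ∈ s, ‖⁅diagonal d, B α⁆‖ ^ 2 ≤ ‖diagonal d‖ ^ 2 * (∑ α ∈ s, ‖B α‖ ^ 2 + x) := by
  have hexcess (i j : ι) : spreadExcess d i j * ∑ α ∈ s, B α i j ^ 2
      ≤ spreadExcess d i j * (x / 2) := by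
    rcases eq_or_ne i j with rfl | hij
    · simp only [spreadExcess_self, zero_mul, le_refl]
    · gcongr
      · exact spreadExcess_nonneg d i j
      · linarith [two_mul_sum_apply_sq_le hB horth hx₀ hx hij]
  have hentry (i j : ι) : (d i - d j) ^ 2 * ∑ α ∈ s, B α i j ^ 2
      ≤ (∑ k, d k ^ 2) * ∑ α ∈ s, B α i j ^ 2 + spreadExcess d i j * (x / 2) := by
    refine le_trans ?_ (add_le_add_right (hexcess i j) _)
    rw [← add_mul]
    gcongr
    exact sq_sub_le_sum_sq_add_spreadExcess d i j
  have swap (f : ι → ι → ℝ) : ∑ α ∈ s, ∑ i, ∑ j, f i j * B α i j ^ 2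
      = ∑ i, ∑ j, f i j * ∑ α ∈ s, B α i j ^ 2 := by
    simp only [mul_sum]
    rw [sum_comm]
    exact sum_congr rfl fun _ _ => sum_comm
  have hnorm : ∑ i, ∑ j, ∑ α ∈ s, B α i j ^ 2 = ∑ α ∈ s, ‖B α‖ ^ 2 := by
    simpa only [one_mul, frobenius_norm_sq] using (swap fun _ _ => 1).symm
  calc ∑ α ∈ s, ‖⁅diagonal d, B α⁆‖ ^ 2
      = ∑ i, ∑ j, (d i - d j) ^ 2 * ∑ α ∈ s, B α i j ^ 2 := by
        simp only [norm_sq_lie_diagonal, swap fun i j => (d i - d j) ^ 2]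
    _ ≤ ∑ i, ∑ j, ((∑ k, d k ^ 2) * ∑ α ∈ s, B α i j ^ 2 + spreadExcess d i j * (x / 2)) :=
        sum_le_sum fun i _ => sum_le_sum fun j _ => hentry i j
    _ = (∑ k, d k ^ 2) * ∑ α ∈ s, ‖B α‖ ^ 2 + (∑ i, ∑ j, spreadExcess d i j) * (x / 2) := by
        simp only [sum_add_distrib, ← mul_sum, ← sum_mul, hnorm]
    _ ≤ (∑ k, d k ^ 2) * ∑ α ∈ s, ‖B α‖ ^ 2 + (2 * ∑ k, d k ^ 2) * (x / 2) := by
        gcongr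
        exact sum_sum_spreadExcess_le d
    _ = ‖diagonal d‖ ^ 2 * (∑ α ∈ s, ‖B α‖ ^ 2 + x) := by
        rw [norm_sq_diagonal]
        ring

theorem sum_norm_sq_lie_le {A : Matrix ι ι ℝ} (hA : A.IsSymm) (hB : ∀ α ∈ s, (B α).IsSymm)
    (horth : (s : Set κ).Pairwise fun α β => ⟪B α, B β⟫_ℝ = 0) (hx₀ : 0 ≤ x)
    (hx : ∀ α ∈ s, ‖B α‖ ^ 2 ≤ x) :
    ∑ α ∈ s, ‖⁅A, B α⁆‖ ^ 2 ≤ ‖A‖ ^ 2 * (∑ α ∈ s, ‖B α‖ ^ 2 + x) := by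
  obtain ⟨U, d, hd⟩ := exists_conjStarAlgAut_eq_diagonal hA
  have key := sum_norm_sq_lie_diagonal_le (B := fun α => Unitary.conjStarAlgAut ℝ _ U (B α)) d
    (fun α hα => isSymm_conjStarAlgAut U (hB α hα))
    (by simpa only [inner_conjStarAlgAut] using horth) hx₀
    (by simpa only [norm_conjStarAlgAut] using hx)
  simpa only [← hd, lie_conjStarAlgAut, norm_conjStarAlgAut] using key

/-- Here `P` is the sum of every other squared norm in decreasing order, starting from the largest
one, so that a new largest member swaps the roles of `P` and `∑ ‖B α‖² - P`. -/
theorem exists_sum_sum_interaction_le (hB : ∀ α ∈ s, (B α).IsSymm)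
    (horth : (s : Set κ).Pairwise fun α β => ⟪B α, B β⟫_ℝ = 0) :
    ∃ P, 0 ≤ P ∧ P ≤ ∑ α ∈ s, ‖B α‖ ^ 2 ∧ (∀ α ∈ s, ‖B α‖ ^ 2 ≤ P) ∧
      ∑ α ∈ s, ∑ β ∈ s, interaction (B α) (B β)
        ≤ (∑ α ∈ s, ‖B α‖ ^ 2) ^ 2 + 2 * P * (∑ α ∈ s, ‖B α‖ ^ 2 - P) := by
  classical
  induction s using Finset.induction_on_max_value (fun α => ‖B α‖ ^ 2) with
  | empty => exact ⟨0, by simp⟩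
  | insert a s ha hmax ih =>
    have hBs (α) (hα : α ∈ s) : (B α).IsSymm := hB α (mem_insert_of_mem hα)
    have horths : (s : Set κ).Pairwise fun α β => ⟪B α, B β⟫_ℝ = 0 :=
      horth.mono (coe_subset.2 (subset_insert a s))
    obtain ⟨P, hP₀, hPS, hP, hmain⟩ := ih hBs horths
    have hmixed : ∑ α ∈ s, interaction (B a) (B α)
        ≤ ‖B a‖ ^ 2 * (∑ α ∈ s, ‖B α‖ ^ 2 + P) := by
      refine le_trans (sum_le_sum fun α hα => ?_)
        (sum_norm_sq_lie_le (hB a (mem_insert_self a s)) hBs horths hP₀ hP)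
      rw [interaction, horth (mem_insert_self a s) (mem_insert_of_mem hα) (by grind)]
      simp
    have hsum : ∑ α ∈ insert a s, ∑ β ∈ insert a s, interaction (B α) (B β)
        = ‖B a‖ ^ 4 + 2 * ∑ α ∈ s, interaction (B a) (B α)
          + ∑ α ∈ s, ∑ β ∈ s, interaction (B α) (B β) := by
      simp only [sum_insert ha, sum_add_distrib, interaction_self, interaction_comm _ (B a)]
      ring
    refine ⟨‖B a‖ ^ 2 + ∑ α ∈ s, ‖B α‖ ^ 2 - P, ?_, ?_, ?_, ?_⟩
    · nlinarith [sq_nonneg ‖B a‖]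
    · rw [sum_insert ha]
      linarith
    · intro α hα
      rcases mem_insert.1 hα with rfl | hα
      · linarith
      · linarith [hmax α hα]
    · rw [hsum, sum_insert ha]
      linarith

theorem sum_sum_interaction_le_of_pairwise_orthogonal (hB : ∀ α ∈ s, (B α).IsSymm)
    (horth : (s : Set κ).Pairwise fun α β => ⟪B α, B β⟫_ℝ = 0) :
    ∑ α ∈ s, ∑ β ∈ s, interaction (B α) (B β) ≤ 3 / 2 * (∑ α ∈ s, ‖B α‖ ^ 2) ^ 2 := by
  obtain ⟨P, -, -, -, hP⟩ := exists_sum_sum_interaction_le hB horth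
  nlinarith [sq_nonneg (2 * P - ∑ α ∈ s, ‖B α‖ ^ 2)]

/-- The Li–Li inequality. -/
theorem sum_sum_interaction_le [Fintype κ] (hB : ∀ α, (B α).IsSymm) :
    ∑ α, ∑ β, interaction (B α) (B β) ≤ 3 / 2 * (∑ α, ‖B α‖ ^ 2) ^ 2 := by
  classical
  obtain ⟨U, hU⟩ := exists_unitary_smul_pairwise_orthogonal B
  have hsymm (α : κ) : (((U : Matrix κ κ ℝ) • B) α).IsSymm := by
    simp only [Matrix.Module.smul_apply, IsSymm, transpose_sum, transpose_smul, (hB _).eq]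
  rw [← sum_sum_interaction_unitary_smul U, ← sum_norm_sq_unitary_smul U]
  exact sum_sum_interaction_le_of_pairwise_orthogonal (fun α _ => hsymm α)
    fun α _ β _ hαβ => hU hαβ

end OrthogonalFamily

/-! ### The reaction terms of a second fundamental form -/

section Reaction

variable {ι κ : Type*} [Fintype κ]

theorem isSymm_componentAlong {h : κ → Matrix ι ι ℝ} (hh : ∀ α, (h α).IsSymm) (u : κ → ℝ) :
    (componentAlong u h).IsSymm := by
  simp only [componentAlong, IsSymm, transpose_sum, transpose_smul, (hh _).eq]

theorem isSymm_componentOrthogonal {h : κ → Matrix ι ι ℝ} (hh : ∀ α, (h α).IsSymm) (u : κ → ℝ)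
    (α : κ) : (componentOrthogonal u h α).IsSymm :=
  (hh α).sub ((isSymm_componentAlong hh u).smul _)

variable [Fintype ι] [DecidableEq ι]

/-- The trace-free part of a square matrix; for `A₁` this is `Å₁`. -/
noncomputable def tracelessPart (X : Matrix ι ι ℝ) : Matrix ι ι ℝ :=
  X - (trace X / Fintype.card ι) • 1

theorem isSymm_tracelessPart {X : Matrix ι ι ℝ} (hX : X.IsSymm) : (tracelessPart X).IsSymm :=
  hX.sub (isSymm_one.smul _)

theorem inner_one_left (X : Matrix ι ι ℝ) : ⟪1, X⟫_ℝ = trace X := by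
  rw [frobenius_inner_eq_trace, transpose_one, Matrix.one_mul]

theorem interaction_tracelessPart_left (X : Matrix ι ι ℝ) {Y : Matrix ι ι ℝ} (hY : trace Y = 0) :
    interaction (tracelessPart X) Y = interaction X Y := by
  have hinner : ⟪tracelessPart X, Y⟫_ℝ = ⟪X, Y⟫_ℝ := by
    rw [tracelessPart, inner_sub_left, real_inner_smul_left, inner_one_left, hY, mul_zero, sub_zero]
  have hlie : ⁅tracelessPart X, Y⁆ = ⁅X, Y⁆ := by
    simp [tracelessPart, Ring.lie_def, Matrix.sub_mul, Matrix.mul_sub]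
  rw [interaction, hinner, hlie, interaction]

theorem norm_sq_tracelessPart [Nonempty ι] (X : Matrix ι ι ℝ) :
    ‖tracelessPart X‖ ^ 2 = ‖X‖ ^ 2 - trace X ^ 2 / Fintype.card ι := by
  have hone : ‖(1 : Matrix ι ι ℝ)‖ ^ 2 = Fintype.card ι := by
    rw [← real_inner_self_eq_norm_sq, inner_one_left, trace_one]
  rw [tracelessPart, norm_sub_sq_real, norm_smul, mul_pow, Real.norm_eq_abs, sq_abs, hone,
    real_inner_smul_right, real_inner_comm, inner_one_left]
  field_simp
  ring

theorem sum_sum_interaction_le_components {u : κ → ℝ} (hu : ∑ α, u α ^ 2 = 1)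
    {h : κ → Matrix ι ι ℝ} (hh : ∀ α, (h α).IsSymm)
    (htr : ∀ α, trace (componentOrthogonal u h α) = 0) :
    ∑ α, ∑ β, interaction (h α) (h β)
      ≤ ‖componentAlong u h‖ ^ 4
        + 4 * ‖tracelessPart (componentAlong u h)‖ ^ 2 * ∑ α, ‖componentOrthogonal u h α‖ ^ 2
        + 3 / 2 * (∑ α, ‖componentOrthogonal u h α‖ ^ 2) ^ 2 := by
  have hmixed : ∑ α, interaction (componentAlong u h) (componentOrthogonal u h α)
      ≤ 2 * ‖tracelessPart (componentAlong u h)‖ ^ 2 * ∑ α, ‖componentOrthogonal u h α‖ ^ 2 := by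
    rw [mul_sum]
    refine sum_le_sum fun α _ => ?_
    rw [← interaction_tracelessPart_left _ (htr α)]
    exact interaction_le (isSymm_tracelessPart (isSymm_componentAlong hh u)) _
  rw [sum_sum_interaction_eq_components hu]
  linarith [sum_sum_interaction_le (isSymm_componentOrthogonal hh u)]

end Reaction

/-- The upper bound for `2R₁ - 2cR₂` in terms of `A₁sq = |A₁|²`, `Ao₁sq = |Å₁|²`, `Amsq = |A₋|²`,
the pinching quantity `Q` and the pinching margin `N = n (c - 1/n)`. -/
noncomputable def reactionBound (a N A₁sq Ao₁sq Amsq Q : ℝ) : ℝ :=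
  2 * A₁sq * Q - 2 * a * A₁sq - (2 * a / N) * Amsq + (2 / N) * Amsq * Q
    + (6 - 2 / N) * Ao₁sq * Amsq + (3 - 2 / N) * Amsq ^ 2

-- Here `Q - a = |Å₁|² + |A₋|² - N |H|² / n` for `N = n (c - 1/n)`, so the terms over `N` cancel.
theorem reactionBound_eq {n c : ℝ} (hn : n ≠ 0) (hc : c ≠ 1 / n) (a A₁sq Amsq Hsq : ℝ) :
    reactionBound a (n * (c - 1 / n)) A₁sq (A₁sq - Hsq / n) Amsq (A₁sq + Amsq + a - c * Hsq)
      = 2 * A₁sq ^ 2 - 2 * c * Hsq * A₁sq + 8 * (A₁sq - Hsq / n) * Amsq + 3 * Amsq ^ 2 := by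
  have hN : n * (c - 1 / n) ≠ 0 := mul_ne_zero hn (sub_ne_zero.2 hc)
  have hcN : c = (n * (c - 1 / n) + 1) / n := by
    field_simp
    ring
  generalize n * (c - 1 / n) = N at hN hcN ⊢
  rw [reactionBound, hcN]
  field_simp
  ring

theorem reactionBound_nonpos {a N A₁sq Ao₁sq Amsq Q : ℝ} (ha : 0 ≤ a) (hN₀ : 0 < N)
    (hN : N ≤ 1 / 3) (hA₁ : 0 ≤ A₁sq) (hAo₁ : 0 ≤ Ao₁sq) (hAm : 0 ≤ Amsq) (hQ : Q ≤ 0) :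
    reactionBound a N A₁sq Ao₁sq Amsq Q ≤ 0 := by
  have hcoeff : 6 ≤ 2 / N := by
    rw [le_div_iff₀ hN₀]
    linarith
  have h₁ : 2 * A₁sq * Q ≤ 0 := mul_nonpos_of_nonneg_of_nonpos (by positivity) hQ
  have h₂ : 2 / N * Amsq * Q ≤ 0 := mul_nonpos_of_nonneg_of_nonpos (by positivity) hQ
  have h₃ : (6 - 2 / N) * Ao₁sq * Amsq ≤ 0 :=
    mul_nonpos_of_nonpos_of_nonneg (mul_nonpos_of_nonpos_of_nonneg (by linarith) hAo₁) hAm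
  have h₄ : (3 - 2 / N) * Amsq ^ 2 ≤ 0 :=
    mul_nonpos_of_nonpos_of_nonneg (by linarith) (sq_nonneg _)
  have h₅ : 0 ≤ 2 * a * A₁sq := by positivity
  have h₆ : 0 ≤ 2 * a / N * Amsq := by positivity
  rw [reactionBound]
  linarith

section MeanCurvature

variable {ι κ : Type*} [Fintype ι] [Fintype κ] {h : κ → Matrix ι ι ℝ}

/-- The mean curvature direction `ν⁺ = H / |H|` in the given normal frame; it is `0` if `H = 0`. -/
noncomputable def meanCurvatureDirection (h : κ → Matrix ι ι ℝ) (α : κ) : ℝ :=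
  trace (h α) / √(∑ β, trace (h β) ^ 2)

theorem sum_meanCurvatureDirection_sq (hH : 0 < ∑ α, trace (h α) ^ 2) :
    ∑ α, meanCurvatureDirection h α ^ 2 = 1 := by
  simp only [meanCurvatureDirection, div_pow, ← sum_div, Real.sq_sqrt hH.le, div_self hH.ne']

theorem sqrt_mul_meanCurvatureDirection (hH : 0 < ∑ α, trace (h α) ^ 2) (α : κ) :
    √(∑ β, trace (h β) ^ 2) * meanCurvatureDirection h α = trace (h α) :=
  mul_div_cancel₀ _ (Real.sqrt_pos.2 hH).ne'

theorem trace_componentAlong_meanCurvatureDirection (hH : 0 < ∑ α, trace (h α) ^ 2) :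
    trace (componentAlong (meanCurvatureDirection h) h) = √(∑ α, trace (h α) ^ 2) := by
  have hterm (α : κ) : meanCurvatureDirection h α * trace (h α)
      = √(∑ β, trace (h β) ^ 2) * meanCurvatureDirection h α ^ 2 := by
    rw [sq, ← mul_assoc, sqrt_mul_meanCurvatureDirection hH, mul_comm]
  simp only [componentAlong, trace_sum, trace_smul, smul_eq_mul, hterm, ← mul_sum,
    sum_meanCurvatureDirection_sq hH, mul_one]

theorem trace_componentOrthogonal_meanCurvatureDirection (hH : 0 < ∑ α, trace (h α) ^ 2) (α : κ) :
    trace (componentOrthogonal (meanCurvatureDirection h) h α) = 0 := by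
  rw [componentOrthogonal, trace_sub, trace_smul, smul_eq_mul,
    trace_componentAlong_meanCurvatureDirection hH, mul_comm, sqrt_mul_meanCurvatureDirection hH,
    sub_self]

theorem sum_sum_sq_sum_trace_mul (hH : 0 < ∑ α, trace (h α) ^ 2) :
    ∑ i, ∑ j, (∑ α, trace (h α) * h α i j) ^ 2
      = (∑ α, trace (h α) ^ 2) * ‖componentAlong (meanCurvatureDirection h) h‖ ^ 2 := by
  have hsmul : ∑ α, trace (h α) • h α
      = √(∑ α, trace (h α) ^ 2) • componentAlong (meanCurvatureDirection h) h := by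
    simp only [componentAlong, smul_sum, smul_smul, sqrt_mul_meanCurvatureDirection hH]
  rw [← Real.sq_sqrt hH.le, ← sq_abs √_, ← Real.norm_eq_abs, ← mul_pow, ← norm_smul, ← hsmul,
    frobenius_norm_sq]
  simp only [Matrix.sum_apply, Matrix.smul_apply, smul_eq_mul]

theorem sum_sum_interaction_eq_coordinates (hh : ∀ α, (h α).IsSymm) :
    ∑ α, ∑ β, interaction (h α) (h β) = ∑ α, ∑ β, (∑ i, ∑ j, h α i j * h β i j) ^ 2
      + ∑ i, ∑ j, ∑ α, ∑ β, (∑ p, (h α i p * h β j p - h β i p * h α j p)) ^ 2 := by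
  have hlie (α β : κ) (i j : ι) :
      ∑ p, (h α i p * h β j p - h β i p * h α j p) = ⁅h α, h β⁆ i j := by
    rw [Ring.lie_def, Matrix.sub_apply, mul_apply, mul_apply, sum_sub_distrib]
    simp only [(hh _).apply j]
  have hswap : ∑ α, ∑ β, ‖⁅h α, h β⁆‖ ^ 2 = ∑ i, ∑ j, ∑ α, ∑ β, ⁅h α, h β⁆ i j ^ 2 := by
    simp only [frobenius_norm_sq]
    rw [sum_congr rfl fun α _ => sum_comm, sum_comm]
    refine sum_congr rfl fun i _ => ?_
    rw [sum_congr rfl fun α _ => sum_comm, sum_comm]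
  simp only [interaction, sum_add_distrib, hlie, hswap, frobenius_inner_def]

theorem two_mul_sum_sum_interaction_sub_le_reactionBound [Nonempty ι] [DecidableEq ι]
    (hh : ∀ α, (h α).IsSymm) (hH : 0 < ∑ α, trace (h α) ^ 2) (a : ℝ) {c : ℝ}
    (hc : c ≠ 1 / Fintype.card ι) :
    2 * ∑ α, ∑ β, interaction (h α) (h β)
        - 2 * c * ∑ i, ∑ j, (∑ α, trace (h α) * h α i j) ^ 2
      ≤ reactionBound a (Fintype.card ι * (c - 1 / Fintype.card ι))
          (‖componentAlong (meanCurvatureDirection h) h‖ ^ 2)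
          (‖tracelessPart (componentAlong (meanCurvatureDirection h) h)‖ ^ 2)
          (∑ α, ‖componentOrthogonal (meanCurvatureDirection h) h α‖ ^ 2)
          (∑ α, ‖h α‖ ^ 2 + a - c * ∑ α, trace (h α) ^ 2) := by
  have hu := sum_meanCurvatureDirection_sq hH
  have hA₁ : ‖tracelessPart (componentAlong (meanCurvatureDirection h) h)‖ ^ 2
      = ‖componentAlong (meanCurvatureDirection h) h‖ ^ 2
        - (∑ α, trace (h α) ^ 2) / Fintype.card ι := by
    rw [norm_sq_tracelessPart, trace_componentAlong_meanCurvatureDirection hH, Real.sq_sqrt hH.le]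
  have hR₁ := sum_sum_interaction_le_components hu hh
    (trace_componentOrthogonal_meanCurvatureDirection hH)
  rw [hA₁] at hR₁ ⊢
  rw [sum_norm_sq_eq_componentAlong_add_componentOrthogonal hu h, sum_sum_sq_sum_trace_mul hH,
    reactionBound_eq (Nat.cast_ne_zero.2 Fintype.card_ne_zero) hc]
  linarith

end MeanCurvature

/-- Refined reaction-term estimate for the pinching quantity `Q = |A|² + a - c|H|²`. -/
theorem stmt2 (n m : ℕ) (hn : 2 ≤ n) (hm : 1 ≤ m)
    (h : Fin m → Matrix (Fin n) (Fin n) ℝ) (hsym : ∀ α, (h α).IsSymm)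
    (a c : ℝ) (ha : 0 ≤ a) (hc1 : 1 / (n : ℝ) < c) (hc2 : c ≤ 4 / (3 * (n : ℝ)))
    (normHsq : ℝ) (hnormHsq : normHsq = ∑ α, (Matrix.trace (h α)) ^ 2)
    (hHpos : 0 < normHsq)
    (normH : ℝ) (hnormH : normH = Real.sqrt normHsq)
    (Asq : ℝ) (hAsq : Asq = ∑ α, ∑ i, ∑ j, (h α i j) ^ 2)
    (Q : ℝ) (hQdef : Q = Asq + a - c * normHsq)
    (A₁ : Matrix (Fin n) (Fin n) ℝ)
    (hA₁ : A₁ = ∑ α, (Matrix.trace (h α) / normH) • h α)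
    (A1sq : ℝ) (hA1sq : A1sq = ∑ i, ∑ j, (A₁ i j) ^ 2)
    (Amsq : ℝ)
    (hAmsq : Amsq = ∑ α, ∑ i, ∑ j, (h α i j - (Matrix.trace (h α) / normH) * A₁ i j) ^ 2)
    (Ao1sq : ℝ)
    (hAo1sq : Ao1sq =
      ∑ i, ∑ j, ((A₁ - (normH / (n : ℝ)) • (1 : Matrix (Fin n) (Fin n) ℝ)) i j) ^ 2)
    (R₁ R₂ : ℝ)
    (hR₁ : R₁ = (∑ α, ∑ β, (∑ i, ∑ j, h α i j * h β i j) ^ 2)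
      + ∑ i, ∑ j, ∑ α, ∑ β, (∑ p, (h α i p * h β j p - h β i p * h α j p)) ^ 2)
    (hR₂ : R₂ = ∑ i, ∑ j, (∑ α, Matrix.trace (h α) * h α i j) ^ 2)
    (hQle : Q ≤ 0) :
    2 * R₁ - 2 * c * R₂ ≤
        2 * A1sq * Q - 2 * a * A1sq - (2 * a / ((n : ℝ) * (c - 1 / (n : ℝ)))) * Amsq
          + (2 / ((n : ℝ) * (c - 1 / (n : ℝ)))) * Amsq * Q
          + (6 - 2 / ((n : ℝ) * (c - 1 / (n : ℝ)))) * Ao1sq * Amsq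
          + (3 - 2 / ((n : ℝ) * (c - 1 / (n : ℝ)))) * Amsq ^ 2
      ∧ 2 * A1sq * Q - 2 * a * A1sq - (2 * a / ((n : ℝ) * (c - 1 / (n : ℝ)))) * Amsq
          + (2 / ((n : ℝ) * (c - 1 / (n : ℝ)))) * Amsq * Q
          + (6 - 2 / ((n : ℝ) * (c - 1 / (n : ℝ)))) * Ao1sq * Amsq
          + (3 - 2 / ((n : ℝ) * (c - 1 / (n : ℝ)))) * Amsq ^ 2 ≤ 0 := by
  have : NeZero n := ⟨by lia⟩
  have hn₀ : (0 : ℝ) < n := mod_cast NeZero.pos n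
  have hN : (n : ℝ) * (c - 1 / n) ≤ 1 / 3 := by
    field_simp at hc2 ⊢
    linarith
  subst hnormHsq hnormH
  change A₁ = componentAlong (meanCurvatureDirection h) h at hA₁
  have hAm : Amsq = ∑ α, ‖componentOrthogonal (meanCurvatureDirection h) h α‖ ^ 2 := by
    simp only [hAmsq, frobenius_norm_sq, hA₁]
    rfl
  have hAo₁ : Ao1sq = ‖tracelessPart A₁‖ ^ 2 := by
    rw [hAo1sq, frobenius_norm_sq, tracelessPart, hA₁,
      trace_componentAlong_meanCurvatureDirection hHpos, Fintype.card_fin]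
  have hbound := two_mul_sum_sum_interaction_sub_le_reactionBound (c := c) hsym hHpos a
    (by simpa using hc1.ne')
  simp only [sum_sum_interaction_eq_coordinates hsym, ← hR₁, ← hR₂, ← hA₁, ← hAm, ← hAo₁,
    Fintype.card_fin, frobenius_norm_sq A₁, ← hA1sq, frobenius_norm_sq (h _), ← hAsq,
    ← hQdef] at hbound
  refine ⟨hbound, reactionBound_nonpos ha (mul_pos hn₀ (sub_pos.2 hc1)) hN ?_ ?_ ?_ hQle⟩
  · exact hA1sq.symm ▸ sum_nonneg fun _ _ => sum_nonneg fun _ _ => sq_nonneg _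
  · exact hAo₁.symm ▸ sq_nonneg _
  · exact hAm.symm ▸ sum_nonneg fun _ _ => sq_nonneg _
end

section
/- For every Λ > 0 and every δ > 0 there exists B₀ > 0 such that for all B ≥ B₀ the function f(z) = exp(−B/(z−Λ)) satisfies, for every z ∈ (Λ, 4Λ]: f(z) ≤ δ·f''(z), |f'(z)|·(1 + |f'(z)|) ≤ δ·f''(z), and |f''(z)| ≤ δ. -/
/-!
Differentiation multiplies `f(z) = exp (-B / (z - Λ))` by a large factor each time: `f' = k f` with
`k = B / (z - Λ)²`, and `f'' = (k - 2 / (z - Λ)) f'`, where the correction is at most `k / 2` as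
soon as `B ≥ 4 (z - Λ)`. On a bounded interval `k` tends to infinity uniformly with `B`, so for
every `C` eventually `C f ≤ f'` and `C f' ≤ f''`. In the other direction, with `u = B / (z - Λ)`,
one has `f' = u² e⁻ᵘ / B` and `f'' = (u⁴ - 2 u³) e⁻ᵘ / B²`; since `uⁿ e⁻ᵘ ≤ n!`, these are at most
`2! / B` and `(4! + 2 · 3!) / B²` in absolute value, uniformly in `z > Λ`.
-/

open Filter Set

lemma pow_mul_exp_neg_le_factorial (n : ℕ) {x : ℝ} (hx : 0 ≤ x) :
    x ^ n * Real.exp (-x) ≤ n.factorial := by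
  rw [Real.exp_neg, ← div_eq_mul_inv, div_le_iff₀ (Real.exp_pos x), mul_comm,
    ← div_le_iff₀ (by positivity)]
  exact Real.pow_div_factorial_le_exp x hx n

lemma eventually_forall_le_div_pow (n : ℕ) (C a b : ℝ) :
    ∀ᶠ B in atTop, ∀ z ∈ Ioc a b, C ≤ B / (z - a) ^ n := by
  filter_upwards [eventually_ge_atTop (|C| * (b - a) ^ n)] with B hB z ⟨haz, hzb⟩
  have hz : 0 < z - a := sub_pos.2 haz
  rw [le_div_iff₀ (pow_pos hz n)]
  calc C * (z - a) ^ n ≤ |C| * (b - a) ^ n := by gcongr; exact le_abs_self C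
    _ ≤ B := hB

/-- The blending function `f(z) = exp (-B / (z - Λ))` of the surgery, with threshold `Λ` and
strength `B`. It is defined on the whole line, but is the blending function only for `z > Λ`; at
`z = Λ` division by zero gives it the value `1`. -/
noncomputable def blend (Λ B z : ℝ) : ℝ := Real.exp (-B / (z - Λ))

section Blend

variable {Λ B z : ℝ}

lemma blend_pos : 0 < blend Λ B z := Real.exp_pos _

lemma hasDerivAt_blend (hz : z ≠ Λ) :
    HasDerivAt (blend Λ B) (B / (z - Λ) ^ 2 * blend Λ B z) z := by
  have hz₀ : z - Λ ≠ 0 := sub_ne_zero.2 hz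
  refine ((hasDerivAt_const z (-B)).fun_div
    ((hasDerivAt_id' z).sub_const Λ) hz₀).exp.congr_deriv ?_
  rw [blend]
  ring

lemma deriv_blend (hz : z ≠ Λ) : deriv (blend Λ B) z = B / (z - Λ) ^ 2 * blend Λ B z :=
  (hasDerivAt_blend hz).deriv

lemma deriv_deriv_blend (hz : z ≠ Λ) :
    deriv (deriv (blend Λ B)) z =
      (B / (z - Λ) ^ 2 - 2 / (z - Λ)) * deriv (blend Λ B) z := by
  have hz₀ : z - Λ ≠ 0 := sub_ne_zero.2 hz
  have hderiv : deriv (blend Λ B) =ᶠ[nhds z] fun y ↦ B / (y - Λ) ^ 2 * blend Λ B y :=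
    (eventually_ne_nhds hz).mono fun _ ↦ deriv_blend
  have hprod := ((hasDerivAt_const z B).fun_div
    (((hasDerivAt_id' z).sub_const Λ).fun_pow 2) (pow_ne_zero 2 hz₀)).fun_mul
    (hasDerivAt_blend (B := B) hz)
  rw [hderiv.deriv_eq, hprod.deriv, deriv_blend hz]
  field_simp
  ring

lemma deriv_blend_nonneg (hB : 0 ≤ B) (hz : Λ < z) : 0 ≤ deriv (blend Λ B) z := by
  rw [deriv_blend hz.ne']
  exact mul_nonneg (by positivity) blend_pos.le

lemma deriv_blend_le (hB : 0 < B) (hz : Λ < z) : deriv (blend Λ B) z ≤ 2 / B := by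
  have hz₀ : 0 < z - Λ := sub_pos.2 hz
  have hdecay := pow_mul_exp_neg_le_factorial 2 (div_pos hB hz₀).le
  calc deriv (blend Λ B) z = (B / (z - Λ)) ^ 2 * Real.exp (-(B / (z - Λ))) / B := by
        rw [deriv_blend hz.ne', blend, neg_div]
        field_simp
    _ ≤ 2 / B := by gcongr; exact hdecay

lemma abs_deriv_deriv_blend_le (hB : 0 < B) (hz : Λ < z) :
    |deriv (deriv (blend Λ B)) z| ≤ 36 / B ^ 2 := by
  have hz₀ : 0 < z - Λ := sub_pos.2 hz
  have hu : 0 < B / (z - Λ) := div_pos hB hz₀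
  have heq : deriv (deriv (blend Λ B)) z =
      ((B / (z - Λ)) ^ 4 * Real.exp (-(B / (z - Λ))) -
        2 * ((B / (z - Λ)) ^ 3 * Real.exp (-(B / (z - Λ))))) / B ^ 2 := by
    rw [deriv_deriv_blend hz.ne', deriv_blend hz.ne', blend, neg_div]
    field_simp
  have hdecay₃ := pow_mul_exp_neg_le_factorial 3 hu.le
  have hdecay₄ := pow_mul_exp_neg_le_factorial 4 hu.le
  have hpos₃ : 0 < (B / (z - Λ)) ^ 3 * Real.exp (-(B / (z - Λ))) := by positivity
  have hpos₄ : 0 < (B / (z - Λ)) ^ 4 * Real.exp (-(B / (z - Λ))) := by positivity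
  norm_num [Nat.factorial] at hdecay₃ hdecay₄
  rw [heq, abs_div, abs_of_pos (pow_pos hB 2)]
  gcongr
  exact abs_le.2 ⟨by linarith, by linarith⟩

lemma half_div_sq_mul_deriv_blend_le (hz : Λ < z) (hB : 4 ≤ B / (z - Λ)) :
    B / (z - Λ) ^ 2 / 2 * deriv (blend Λ B) z ≤ deriv (deriv (blend Λ B)) z := by
  have hz₀ : 0 < z - Λ := sub_pos.2 hz
  have hB₀ : 0 ≤ B := by linarith [(le_div_iff₀ hz₀).1 hB]
  have hcorrection : 4 / (z - Λ) ≤ B / (z - Λ) ^ 2 := by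
    calc 4 / (z - Λ) ≤ B / (z - Λ) / (z - Λ) := by gcongr
      _ = B / (z - Λ) ^ 2 := by rw [div_div, sq]
  have hhalf : B / (z - Λ) ^ 2 / 2 ≤ B / (z - Λ) ^ 2 - 2 / (z - Λ) := by
    linarith [show 4 / (z - Λ) = 2 * (2 / (z - Λ)) by ring]
  rw [deriv_deriv_blend hz.ne']
  exact mul_le_mul_of_nonneg_right hhalf (deriv_blend_nonneg hB₀ hz)

end Blend

lemma eventually_mul_blend_le_deriv (C Λ R : ℝ) :
    ∀ᶠ B in atTop, ∀ z ∈ Ioc Λ R, C * blend Λ B z ≤ deriv (blend Λ B) z := by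
  filter_upwards [eventually_forall_le_div_pow 2 C Λ R] with B hC z hz
  rw [deriv_blend hz.1.ne']
  exact mul_le_mul_of_nonneg_right (hC z hz) blend_pos.le

lemma eventually_mul_deriv_blend_le_deriv_deriv (C Λ R : ℝ) :
    ∀ᶠ B in atTop, ∀ z ∈ Ioc Λ R,
      C * deriv (blend Λ B) z ≤ deriv (deriv (blend Λ B)) z := by
  filter_upwards [eventually_ge_atTop 0, eventually_forall_le_div_pow 2 (2 * C) Λ R,
    eventually_forall_le_div_pow 1 4 Λ R] with B hB hC hfour z hz
  calc C * deriv (blend Λ B) z ≤ B / (z - Λ) ^ 2 / 2 * deriv (blend Λ B) z := by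
        gcongr
        · exact deriv_blend_nonneg hB hz.1
        · linarith [hC z hz]
    _ ≤ deriv (deriv (blend Λ B)) z :=
        half_div_sq_mul_deriv_blend_le hz.1 (by simpa only [pow_one] using hfour z hz)

lemma eventually_deriv_blend_le (Λ : ℝ) {ε : ℝ} (hε : 0 < ε) :
    ∀ᶠ B in atTop, ∀ z ∈ Ioi Λ, deriv (blend Λ B) z ≤ ε := by
  filter_upwards [eventually_gt_atTop 0,
    (tendsto_id.const_div_atTop 2).eventually_le_const hε] with B hB hsmall z hz
  exact (deriv_blend_le hB hz).trans hsmall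

lemma eventually_abs_deriv_deriv_blend_le (Λ : ℝ) {ε : ℝ} (hε : 0 < ε) :
    ∀ᶠ B in atTop, ∀ z ∈ Ioi Λ, |deriv (deriv (blend Λ B)) z| ≤ ε := by
  filter_upwards [eventually_gt_atTop 0,
    ((tendsto_pow_atTop two_ne_zero).const_div_atTop 36).eventually_le_const hε]
    with B hB hsmall z hz
  exact (abs_deriv_deriv_blend_le hB hz).trans hsmall

theorem stmt6_general (Λ R : ℝ) {δ : ℝ} (hδ : 0 < δ) :
    ∃ B₀ > (0 : ℝ), ∀ B ≥ B₀, ∀ z ∈ Ioc Λ R,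
      blend Λ B z ≤ δ * deriv (deriv (blend Λ B)) z ∧
      |deriv (blend Λ B) z| * (1 + |deriv (blend Λ B) z|) ≤
        δ * deriv (deriv (blend Λ B)) z ∧
      |deriv (deriv (blend Λ B)) z| ≤ δ := by
  refine ((eventually_gt_atTop 0).and (eventually_forall_ge_atTop.2 ?_)).exists
  filter_upwards [eventually_ge_atTop 0, eventually_mul_blend_le_deriv 1 Λ R,
    eventually_mul_deriv_blend_le_deriv_deriv (2 / δ) Λ R,
    eventually_deriv_blend_le Λ one_pos, eventually_abs_deriv_deriv_blend_le Λ hδ]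
    with B hB hblend hderiv hderiv_le_one hderiv_deriv_le z hz
  have hnonneg := deriv_blend_nonneg hB hz.1
  have hbend : deriv (blend Λ B) z * 2 ≤ δ * deriv (deriv (blend Λ B)) z := by
    rw [← div_le_iff₀' hδ, mul_comm, mul_div_right_comm]
    exact hderiv z hz
  refine ⟨by linarith [hblend z hz], ?_, hderiv_deriv_le z hz.1⟩
  rw [abs_of_nonneg hnonneg]
  calc deriv (blend Λ B) z * (1 + deriv (blend Λ B) z) ≤ deriv (blend Λ B) z * 2 := by
        gcongr
        linarith [hderiv_le_one z hz.1]
    _ ≤ δ * deriv (deriv (blend Λ B)) z := hbend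

/-- For `B` sufficiently large, the blending function `f(z) = exp(-B/(z-Λ))` satisfies
`f ≤ δ f''`, `|f'|(1+|f'|) ≤ δ f''` and `|f''| ≤ δ` on `(Λ, 4Λ]`. -/
theorem stmt6 (Λ δ : ℝ) (hΛ : 0 < Λ) (hδ : 0 < δ) :
    ∃ B₀ > (0 : ℝ), ∀ B ≥ B₀, ∀ z ∈ Set.Ioc Λ (4 * Λ),
      Real.exp (-B / (z - Λ)) ≤ δ * deriv (deriv (fun z => Real.exp (-B / (z - Λ)))) z ∧
      |deriv (fun z => Real.exp (-B / (z - Λ))) z| *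
          (1 + |deriv (fun z => Real.exp (-B / (z - Λ))) z|) ≤
        δ * deriv (deriv (fun z => Real.exp (-B / (z - Λ)))) z ∧
      |deriv (deriv (fun z => Real.exp (-B / (z - Λ)))) z| ≤ δ :=
  stmt6_general Λ (4 * Λ) hδ
end

section
/- Let N ≥ 1 and let h : EuclideanSpace ℝ (Fin N) → ℝ be differentiable. Let c > 0 and H⁰ > 0 and suppose that ‖∇h(x)‖ ≤ c·h(x)² for every x with h(x) ≥ H⁰. Let γ > 1 and let p₀ satisfy h(p₀) ≥ γ·H⁰. Then for every q with ‖q − p₀‖ ≤ (γ−1)/(c·h(p₀)) one has h(q) ≥ h(p₀)/(1 + c·‖q − p₀‖·h(p₀)) ≥ h(p₀)/γ. -/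
/-!
Where `f > 0`, the inequality `-k f² ≤ f'` says `(1 / f)' ≤ k`, so `1 / f` grows at most linearly
with slope `k`; for `f` the restriction of `h` to the segment from `p₀` to `q`, parametrized by
`[0, 1]`, this holds with `k = c ‖q - p₀‖`. The inequality is known only where `f` is at least a
threshold `m`, but the lower bound it yields for `f` is strictly decreasing and still at least `m`
at the endpoint. Hence `f > m` at every earlier time up to which the bound holds, and the bound can
be continued a little further.
-/

open Set Filter Topology

section Riccati

variable {f f' : ℝ → ℝ} {a b k : ℝ}

lemma inv_le_inv_add_mul_of_neg_mul_sq_le_deriv_right (hab : a ≤ b)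
    (hf : ContinuousOn f (Icc a b)) (hf' : ∀ t ∈ Ico a b, HasDerivWithinAt f (f' t) (Ici t) t)
    (hpos : ∀ t ∈ Icc a b, 0 < f t) (hbound : ∀ t ∈ Ico a b, -(k * f t ^ 2) ≤ f' t) :
    (f b)⁻¹ ≤ (f a)⁻¹ + k * (b - a) := by
  have hline (t : ℝ) : HasDerivAt (fun t ↦ (f a)⁻¹ + k * (t - a)) k t := by
    simpa using (((hasDerivAt_id t).sub_const a).const_mul k).const_add (f a)⁻¹
  refine image_le_of_deriv_right_le_deriv_boundary (f := fun t ↦ (f t)⁻¹)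
    (hf.inv₀ fun t ht ↦ (hpos t ht).ne')
    (fun t ht ↦ (hf' t ht).fun_inv (hpos t (Ico_subset_Icc_self ht)).ne') (by simp)
    (fun t _ ↦ (hline t).continuousAt.continuousWithinAt)
    (fun t _ ↦ (hline t).hasDerivWithinAt) (fun t ht ↦ ?_) (right_mem_Icc.2 hab)
  rw [div_le_iff₀ (pow_pos (hpos t (Ico_subset_Icc_self ht)) 2)]
  exact neg_le.1 (hbound t ht)

lemma inv_add_mul_sub_pos {A t : ℝ} (hk : 0 ≤ k) (hA : 0 < A) (ht : a ≤ t) :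
    0 < A⁻¹ + k * (t - a) :=
  add_pos_of_pos_of_nonneg (inv_pos.2 hA) (mul_nonneg hk (sub_nonneg.2 ht))

lemma eventually_inv_add_mul_inv_le_of_neg_mul_sq_le_deriv_right {A m t : ℝ} (ht : t ∈ Ico a b)
    (hf : ContinuousOn f (Icc a b)) (hf' : ∀ x ∈ Ico a b, HasDerivWithinAt f (f' x) (Ici x) x)
    (hbound : ∀ x ∈ Ico a b, m ≤ f x → -(k * f x ^ 2) ≤ f' x) (hk : 0 ≤ k) (hA : 0 < A)
    (hm : m < f t) (hft : (A⁻¹ + k * (t - a))⁻¹ ≤ f t) :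
    ∀ᶠ x in 𝓝[>] t, (A⁻¹ + k * (x - a))⁻¹ ≤ f x := by
  have hden : 0 < A⁻¹ + k * (t - a) := inv_add_mul_sub_pos hk hA ht.1
  have hft_pos : 0 < f t := (inv_pos.2 hden).trans_le hft
  have hcont : ContinuousWithinAt f (Ici t) t := (hf' t ht).continuousWithinAt
  have hgt : ∀ᶠ y in 𝓝[≥] t, y < b ∧ m < f y ∧ 0 < f y :=
    (eventually_nhdsWithin_of_eventually_nhds (eventually_lt_nhds ht.2)).and
      ((hcont.eventually (lt_mem_nhds hm)).and (hcont.eventually (lt_mem_nhds hft_pos)))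
  obtain ⟨u, htu, hu⟩ := mem_nhdsGE_iff_exists_Ico_subset.1 hgt
  filter_upwards [Ioo_mem_nhdsGT htu] with x hx
  have hgood (y : ℝ) (hy : y ∈ Icc t x) : y < b ∧ m < f y ∧ 0 < f y :=
    hu ⟨hy.1, hy.2.trans_lt hx.2⟩
  have hmem (y : ℝ) (hy : y ∈ Icc t x) : y ∈ Ico a b := ⟨ht.1.trans hy.1, (hgood y hy).1⟩
  have hstep : (f x)⁻¹ ≤ (f t)⁻¹ + k * (x - t) :=
    inv_le_inv_add_mul_of_neg_mul_sq_le_deriv_right hx.1.le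
      (hf.mono fun y hy ↦ Ico_subset_Icc_self (hmem y hy))
      (fun y hy ↦ hf' y (hmem y (Ico_subset_Icc_self hy))) (fun y hy ↦ (hgood y hy).2.2)
      (fun y hy ↦ hbound y (hmem y (Ico_subset_Icc_self hy))
        (hgood y (Ico_subset_Icc_self hy)).2.1.le)
  refine inv_le_of_inv_le₀ (hgood x (right_mem_Icc.2 hx.1.le)).2.2 ?_
  calc (f x)⁻¹ ≤ (f t)⁻¹ + k * (x - t) := hstep
    _ ≤ A⁻¹ + k * (t - a) + k * (x - t) := by
      gcongr
      exact inv_le_of_inv_le₀ hden hft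
    _ = A⁻¹ + k * (x - a) := by ring

theorem inv_add_mul_inv_le_of_neg_mul_sq_le_deriv_right {m : ℝ}
    (hf : ContinuousOn f (Icc a b)) (hf' : ∀ t ∈ Ico a b, HasDerivWithinAt f (f' t) (Ici t) t)
    (hbound : ∀ t ∈ Ico a b, m ≤ f t → -(k * f t ^ 2) ≤ f' t) (hk : 0 < k) (ha : 0 < f a)
    (hm : m ≤ ((f a)⁻¹ + k * (b - a))⁻¹) :
    ∀ t ∈ Icc a b, ((f a)⁻¹ + k * (t - a))⁻¹ ≤ f t := by
  let S : Set ℝ := {t | ((f a)⁻¹ + k * (t - a))⁻¹ ≤ f t}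
  have hclosed : IsClosed (S ∩ Icc a b) := by
    rw [inter_comm]
    refine isClosed_Icc.isClosed_le (ContinuousOn.inv₀ (by fun_prop) fun t ht ↦ ?_) hf
    exact (inv_add_mul_sub_pos hk.le ha ht.1).ne'
  refine hclosed.Icc_subset_of_forall_mem_nhdsWithin (by simp [S]) fun t ⟨htS, ht⟩ ↦ ?_
  have hmt : m < f t :=
    calc m ≤ ((f a)⁻¹ + k * (b - a))⁻¹ := hm
      _ < ((f a)⁻¹ + k * (t - a))⁻¹ := by
        gcongr
        · exact inv_add_mul_sub_pos hk.le ha ht.1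
        · exact ht.2
      _ ≤ f t := htS
  exact eventually_inv_add_mul_inv_le_of_neg_mul_sq_le_deriv_right ht hf hf' hbound hk.le ha hmt
    htS

end Riccati

section NormedSpace

variable {E : Type*} [NormedAddCommGroup E] [NormedSpace ℝ E] {s : Set E} {h : E → ℝ}
  {h' : E → E →L[ℝ] ℝ} {c H₀ : ℝ} {p q : E}

theorem div_one_add_mul_le_of_norm_fderiv_le_mul_sq (hs : StarConvex ℝ p s)
    (hh : ∀ x ∈ s, HasFDerivWithinAt h (h' x) s x) (hc : 0 < c)
    (hbound : ∀ x ∈ s, H₀ ≤ h x → ‖h' x‖ ≤ c * h x ^ 2) (hp : 0 < h p) (hq : q ∈ s)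
    (hH₀ : H₀ ≤ h p / (1 + c * ‖q - p‖ * h p)) :
    h p / (1 + c * ‖q - p‖ * h p) ≤ h q := by
  obtain rfl | hne := eq_or_ne q p
  · simp
  have hk : 0 < c * ‖q - p‖ := mul_pos hc (norm_sub_pos_iff.2 hne)
  have hmaps : MapsTo (AffineMap.lineMap p q : ℝ → E) (Icc 0 1) s := fun t ht ↦
    hs.segment_subset hq (segment_eq_image_lineMap ℝ p q ▸ mem_image_of_mem _ ht)
  have hderiv (t : ℝ) (ht : t ∈ Icc (0 : ℝ) 1) :
      HasDerivWithinAt (fun t : ℝ ↦ h (AffineMap.lineMap p q t))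
        (h' (AffineMap.lineMap p q t) (q - p)) (Icc 0 1) t :=
    (hh _ (hmaps ht)).comp_hasDerivWithinAt t AffineMap.hasDerivWithinAt_lineMap hmaps
  have hlower (t : ℝ) (ht : t ∈ Icc (0 : ℝ) 1) (hge : H₀ ≤ h (AffineMap.lineMap p q t)) :
      -(c * ‖q - p‖ * h (AffineMap.lineMap p q t) ^ 2) ≤
        h' (AffineMap.lineMap p q t) (q - p) := by
    refine (abs_le.1 ?_).1
    calc |h' (AffineMap.lineMap p q t) (q - p)|
        ≤ ‖h' (AffineMap.lineMap p q t)‖ * ‖q - p‖ := (h' _).le_opNorm _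
      _ ≤ c * h (AffineMap.lineMap p q t) ^ 2 * ‖q - p‖ := by
        gcongr
        exact hbound _ (hmaps ht) hge
      _ = c * ‖q - p‖ * h (AffineMap.lineMap p q t) ^ 2 := by ring
  have hbarrier : h p / (1 + c * ‖q - p‖ * h p) = ((h p)⁻¹ + c * ‖q - p‖)⁻¹ := by
    field_simp
  rw [hbarrier] at hH₀ ⊢
  simpa using inv_add_mul_inv_le_of_neg_mul_sq_le_deriv_right
    (fun t ht ↦ (hderiv t ht).continuousWithinAt)
    (fun t ht ↦ (hderiv t (Ico_subset_Icc_self ht)).mono_of_mem_nhdsWithin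
      (Icc_mem_nhdsGE_of_mem ht))
    (fun t ht ↦ hlower t (Ico_subset_Icc_self ht)) hk (by simpa using hp) (by simpa using hH₀)
    1 (right_mem_Icc.2 zero_le_one)

theorem stmt7_general (hs : StarConvex ℝ p s) (hh : ∀ x ∈ s, HasFDerivWithinAt h (h' x) s x)
    (hc : 0 < c) (hH₀ : 0 < H₀) (hbound : ∀ x ∈ s, H₀ ≤ h x → ‖h' x‖ ≤ c * h x ^ 2)
    {γ : ℝ} (hγ : 0 < γ) (hp : γ * H₀ ≤ h p) (hq : q ∈ s)
    (hqp : ‖q - p‖ ≤ (γ - 1) / (c * h p)) :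
    h p / (1 + c * ‖q - p‖ * h p) ≤ h q ∧ h p / γ ≤ h p / (1 + c * ‖q - p‖ * h p) := by
  have hp_pos : 0 < h p := (mul_pos hγ hH₀).trans_le hp
  have hden : 1 + c * ‖q - p‖ * h p ≤ γ := by
    rw [le_div_iff₀ (mul_pos hc hp_pos)] at hqp
    linarith
  have hdiv : h p / γ ≤ h p / (1 + c * ‖q - p‖ * h p) := by gcongr
  have hthreshold : H₀ ≤ h p / γ := (le_div_iff₀' hγ).2 hp
  exact ⟨div_one_add_mul_le_of_norm_fderiv_le_mul_sq hs hh hc hbound hp_pos hq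
    (hthreshold.trans hdiv), hdiv⟩

end NormedSpace

/-- Local Harnack-type estimate: a gradient bound `‖∇h‖ ≤ c h²` above the threshold `H⁰`
allows comparison of the values of `h` at nearby points. -/
theorem stmt7 (N : ℕ) (hN : 1 ≤ N) (h : EuclideanSpace ℝ (Fin N) → ℝ)
    (hdiff : Differentiable ℝ h) (c H₀ : ℝ) (hc : 0 < c) (hH₀ : 0 < H₀)
    (hgrad : ∀ x, H₀ ≤ h x → ‖gradient h x‖ ≤ c * (h x) ^ 2)
    (γ : ℝ) (hγ : 1 < γ) (p₀ : EuclideanSpace ℝ (Fin N)) (hp₀ : γ * H₀ ≤ h p₀) :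
    ∀ q, ‖q - p₀‖ ≤ (γ - 1) / (c * h p₀) →
      h p₀ / (1 + c * ‖q - p₀‖ * h p₀) ≤ h q ∧
        h p₀ / γ ≤ h p₀ / (1 + c * ‖q - p₀‖ * h p₀) := by
  exact fun q ↦ stmt7_general (starConvex_univ p₀)
    (fun x _ ↦ (hdiff x).hasFDerivAt.hasFDerivWithinAt) hc hH₀
    (fun x _ ↦ by simpa [gradient] using hgrad x) (zero_lt_one.trans hγ) hp₀ (mem_univ q)
end

section
/- Let N ≥ 1 and let w, z, W, Z : ℝ × EuclideanSpace ℝ (Fin N) → ℝ, with w and z twice continuously differentiable and z(t,x) ≠ 0 everywhere. Write ∂ₜ for the time derivative, ∇ for the spatial gradient, and Δ := Σᵢ ∂²ᵢ for the spatial Laplacian. If ∂ₜw = Δw + W and ∂ₜz = Δz + Z, then the quotient satisfies ∂ₜ(w/z) = Δ(w/z) + (2/z)·⟨∇(w/z), ∇z⟩ + W/z − (w/z²)·Z. -/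
/-!
Locally `w = (w / z) * z`, so the Leibniz rule for the Laplacian gives
`Δw = z Δ(w / z) + 2 ⟨∇(w / z), ∇z⟩ + (w / z) Δz`. The cross term is the gradient term of the
identity: solve for `Δ(w / z)` and subtract from the quotient rule for `∂ₜ(w / z)`; the heat
operator then falls on `w` and `z` alone, where it is `W` and `Z`.
-/

/-- Time derivative `∂ₜ f` of a function of `(t, x)`. -/
noncomputable def timeDeriv {N : ℕ} (f : ℝ × EuclideanSpace ℝ (Fin N) → ℝ)
    (p : ℝ × EuclideanSpace ℝ (Fin N)) : ℝ :=
  deriv (fun s => f (s, p.2)) p.1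

/-- Spatial partial derivative `∂ᵢ f` of a function of `(t, x)`. -/
noncomputable def spatialPartial {N : ℕ} (f : ℝ × EuclideanSpace ℝ (Fin N) → ℝ) (i : Fin N)
    (p : ℝ × EuclideanSpace ℝ (Fin N)) : ℝ :=
  deriv (fun s : ℝ => f (p.1, p.2 + s • EuclideanSpace.single i 1)) 0

/-- Spatial Laplacian `Δ f = Σᵢ ∂²ᵢ f` of a function of `(t, x)`. -/
noncomputable def spatialLaplacian {N : ℕ} (f : ℝ × EuclideanSpace ℝ (Fin N) → ℝ)
    (p : ℝ × EuclideanSpace ℝ (Fin N)) : ℝ :=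
  ∑ i, spatialPartial (spatialPartial f i) i p

open Filter Topology

section LineDeriv

variable {𝕜 F A : Type*} [NontriviallyNormedField 𝕜] [NormedAddCommGroup F] [NormedSpace 𝕜 F]
  [NormedRing A] [NormedAlgebra 𝕜 A]

section Module

variable {E : Type*} [AddCommGroup E] [Module 𝕜 E] {x v : E}

theorem lineDeriv_fun_add {f g : E → F} (hf : LineDifferentiableAt 𝕜 f x v)
    (hg : LineDifferentiableAt 𝕜 g x v) :
    lineDeriv 𝕜 (fun y => f y + g y) x v = lineDeriv 𝕜 f x v + lineDeriv 𝕜 g x v :=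
  deriv_fun_add hf hg

theorem lineDeriv_fun_mul {f g : E → A} (hf : LineDifferentiableAt 𝕜 f x v)
    (hg : LineDifferentiableAt 𝕜 g x v) :
    lineDeriv 𝕜 (fun y => f y * g y) x v
      = lineDeriv 𝕜 f x v * g x + f x * lineDeriv 𝕜 g x v := by
  simpa only [lineDeriv, zero_smul, add_zero] using deriv_fun_mul hf hg

end Module

variable {E : Type*} [NormedAddCommGroup E] [NormedSpace 𝕜 E] {x : E}

theorem eventually_differentiableAt_of_contDiffAt_one {f : E → F} (hf : ContDiffAt 𝕜 1 f x) :
    ∀ᶠ y in 𝓝 x, DifferentiableAt 𝕜 f y :=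
  (hf.eventually (by simp)).mono fun _ hy => hy.differentiableAt_one

theorem differentiableAt_lineDeriv_of_contDiffAt_two {f : E → F} (hf : ContDiffAt 𝕜 2 f x)
    (v : E) : DifferentiableAt 𝕜 (fun y => lineDeriv 𝕜 f y v) x := by
  have hfderiv : DifferentiableAt 𝕜 (fderiv 𝕜 f) x :=
    (hf.fderiv_right (m := 1) (by norm_num)).differentiableAt_one
  have heq : (fun y => lineDeriv 𝕜 f y v) =ᶠ[𝓝 x] fun y => fderiv 𝕜 f y v :=
    (eventually_differentiableAt_of_contDiffAt_one (hf.of_le one_le_two)).mono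
      fun _ hy => hy.lineDeriv_eq_fderiv
  exact (hfderiv.clm_apply (differentiableAt_const v)).congr_of_eventuallyEq heq

theorem lineDeriv_lineDeriv_fun_mul {f g : E → A} (hf : ContDiffAt 𝕜 2 f x)
    (hg : ContDiffAt 𝕜 2 g x) (u v : E) :
    lineDeriv 𝕜 (fun y => lineDeriv 𝕜 (fun y => f y * g y) y v) x u
      = lineDeriv 𝕜 (fun y => lineDeriv 𝕜 f y v) x u * g x
        + lineDeriv 𝕜 f x v * lineDeriv 𝕜 g x u + lineDeriv 𝕜 f x u * lineDeriv 𝕜 g x v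
        + f x * lineDeriv 𝕜 (fun y => lineDeriv 𝕜 g y v) x u := by
  have hf₁ := hf.differentiableAt two_ne_zero
  have hg₁ := hg.differentiableAt two_ne_zero
  have hf₂ := differentiableAt_lineDeriv_of_contDiffAt_two hf v
  have hg₂ := differentiableAt_lineDeriv_of_contDiffAt_two hg v
  have leibniz : (fun y => lineDeriv 𝕜 (fun y => f y * g y) y v) =ᶠ[𝓝 x]
      fun y => lineDeriv 𝕜 f y v * g y + f y * lineDeriv 𝕜 g y v := by
    filter_upwards [eventually_differentiableAt_of_contDiffAt_one (hf.of_le one_le_two),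
      eventually_differentiableAt_of_contDiffAt_one (hg.of_le one_le_two)] with y hfy hgy
    exact lineDeriv_fun_mul hfy.lineDifferentiableAt hgy.lineDifferentiableAt
  rw [leibniz.lineDeriv_eq,
    lineDeriv_fun_add (hf₂.fun_mul hg₁).lineDifferentiableAt
      (hf₁.fun_mul hg₂).lineDifferentiableAt,
    lineDeriv_fun_mul hf₂.lineDifferentiableAt hg₁.lineDifferentiableAt,
    lineDeriv_fun_mul hf₁.lineDifferentiableAt hg₂.lineDifferentiableAt]
  simp only [add_assoc]

theorem lineDeriv_lineDeriv_congr {f g : E → F} (h : f =ᶠ[𝓝 x] g) (u v : E) :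
    lineDeriv 𝕜 (fun y => lineDeriv 𝕜 f y v) x u
      = lineDeriv 𝕜 (fun y => lineDeriv 𝕜 g y v) x u := by
  have hv : (fun y => lineDeriv 𝕜 f y v) =ᶠ[𝓝 x] fun y => lineDeriv 𝕜 g y v :=
    h.eventuallyEq_nhds.mono fun _ hy => hy.lineDeriv_eq
  exact hv.lineDeriv_eq

end LineDeriv

section SpaceTime

variable {N : ℕ} {f g : ℝ × EuclideanSpace ℝ (Fin N) → ℝ} {p : ℝ × EuclideanSpace ℝ (Fin N)}

theorem spatialPartial_eq_lineDeriv (f : ℝ × EuclideanSpace ℝ (Fin N) → ℝ) (i : Fin N)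
    (p : ℝ × EuclideanSpace ℝ (Fin N)) :
    spatialPartial f i p = lineDeriv ℝ (fun x => f (p.1, x)) p.2 (EuclideanSpace.single i 1) :=
  rfl

theorem spatialLaplacian_eq_sum_lineDeriv (f : ℝ × EuclideanSpace ℝ (Fin N) → ℝ)
    (p : ℝ × EuclideanSpace ℝ (Fin N)) :
    spatialLaplacian f p = ∑ i, lineDeriv ℝ
      (fun y => lineDeriv ℝ (fun x => f (p.1, x)) y (EuclideanSpace.single i 1))
      p.2 (EuclideanSpace.single i 1) :=
  rfl

theorem spatialLaplacian_congr (h : (fun x => f (p.1, x)) =ᶠ[𝓝 p.2] fun x => g (p.1, x)) :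
    spatialLaplacian f p = spatialLaplacian g p := by
  simp only [spatialLaplacian_eq_sum_lineDeriv, lineDeriv_lineDeriv_congr h]

theorem spatialLaplacian_fun_mul (hf : ContDiffAt ℝ 2 (fun x => f (p.1, x)) p.2)
    (hg : ContDiffAt ℝ 2 (fun x => g (p.1, x)) p.2) :
    spatialLaplacian (fun q => f q * g q) p
      = spatialLaplacian f p * g p + 2 * ∑ i, spatialPartial f i p * spatialPartial g i p
        + f p * spatialLaplacian g p := by
  simp only [spatialLaplacian_eq_sum_lineDeriv, spatialPartial_eq_lineDeriv, Finset.sum_mul,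
    Finset.mul_sum, ← Finset.sum_add_distrib]
  refine Finset.sum_congr rfl fun i _ => ?_
  rw [lineDeriv_lineDeriv_fun_mul hf hg]
  ring

theorem spatialLaplacian_fun_div (hf : ContDiffAt ℝ 2 (fun x => f (p.1, x)) p.2)
    (hg : ContDiffAt ℝ 2 (fun x => g (p.1, x)) p.2) (hg₀ : g p ≠ 0) :
    spatialLaplacian (fun q => f q / g q) p
      = spatialLaplacian f p / g p - f p / g p ^ 2 * spatialLaplacian g p
        - 2 / g p * ∑ i, spatialPartial (fun q => f q / g q) i p * spatialPartial g i p := by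
  have hcancel : (fun x => f (p.1, x)) =ᶠ[𝓝 p.2] fun x => f (p.1, x) / g (p.1, x) * g (p.1, x) :=
    (hg.continuousAt.eventually_ne hg₀).mono fun x hx => (div_mul_cancel₀ (f (p.1, x)) hx).symm
  have hleibniz : spatialLaplacian f p
      = spatialLaplacian (fun q => f q / g q) p * g p
        + 2 * ∑ i, spatialPartial (fun q => f q / g q) i p * spatialPartial g i p
        + f p / g p * spatialLaplacian g p :=
    (spatialLaplacian_congr hcancel).trans (spatialLaplacian_fun_mul (hf.div hg hg₀) hg)
  rw [hleibniz]
  field_simp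
  ring

theorem timeDeriv_fun_div (hf : DifferentiableAt ℝ (fun t => f (t, p.2)) p.1)
    (hg : DifferentiableAt ℝ (fun t => g (t, p.2)) p.1) (hg₀ : g p ≠ 0) :
    timeDeriv (fun q => f q / g q) p
      = (timeDeriv f p * g p - f p * timeDeriv g p) / g p ^ 2 :=
  deriv_fun_div hf hg hg₀

end SpaceTime

theorem stmt12_general {N : ℕ} {w z : ℝ × EuclideanSpace ℝ (Fin N) → ℝ} {W Z : ℝ}
    {p : ℝ × EuclideanSpace ℝ (Fin N)}
    (hwt : DifferentiableAt ℝ (fun t => w (t, p.2)) p.1)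
    (hzt : DifferentiableAt ℝ (fun t => z (t, p.2)) p.1)
    (hwx : ContDiffAt ℝ 2 (fun x => w (p.1, x)) p.2)
    (hzx : ContDiffAt ℝ 2 (fun x => z (p.1, x)) p.2) (hz0 : z p ≠ 0)
    (hweq : timeDeriv w p = spatialLaplacian w p + W)
    (hzeq : timeDeriv z p = spatialLaplacian z p + Z) :
    timeDeriv (fun q => w q / z q) p
      = spatialLaplacian (fun q => w q / z q) p
        + 2 / z p * (∑ i, spatialPartial (fun q => w q / z q) i p * spatialPartial z i p)
        + W / z p - w p / z p ^ 2 * Z := by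
  rw [timeDeriv_fun_div hwt hzt hz0, spatialLaplacian_fun_div hwx hzx hz0, hweq, hzeq]
  field_simp
  ring

/-- Quotient identity for solutions of inhomogeneous heat equations:
if `∂ₜw = Δw + W` and `∂ₜz = Δz + Z` with `z ≠ 0`, then
`∂ₜ(w/z) = Δ(w/z) + (2/z)⟨∇(w/z), ∇z⟩ + W/z - (w/z²)Z`. -/
theorem stmt12 (N : ℕ) (hN : 1 ≤ N)
    (w z W Z : ℝ × EuclideanSpace ℝ (Fin N) → ℝ)
    (hw : ContDiff ℝ 2 w) (hz : ContDiff ℝ 2 z) (hz0 : ∀ p, z p ≠ 0)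
    (hweq : ∀ p, timeDeriv w p = spatialLaplacian w p + W p)
    (hzeq : ∀ p, timeDeriv z p = spatialLaplacian z p + Z p) :
    ∀ p, timeDeriv (fun q => w q / z q) p
      = spatialLaplacian (fun q => w q / z q) p
        + (2 / z p) * (∑ i, spatialPartial (fun q => w q / z q) i p * spatialPartial z i p)
        + W p / z p - (w p / (z p) ^ 2) * Z p := by
  have hw₁ := hw.differentiable two_ne_zero
  have hz₁ := hz.differentiable two_ne_zero
  exact fun p => stmt12_general (by fun_prop) (by fun_prop) (by fun_prop) (by fun_prop) (hz0 p)
    (hweq p) (hzeq p)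
end
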